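/- arXiv:2104.12141 — 12 statements merged into one kernel-verified Lean document; each statement's English description precedes it below -/
import Mathlib

section
/- Let (X,d) be a metric space, C ⊆ X, and k ≥ 1 an integer. Let μ be a probability measure on X with finite support such that cost_μ(C') > 0 for every k-element subset C' ⊆ C, and such that some k-element subset C* ⊆ C attains the infimum of cost_μ over all k-element subsets of C. Then the total sensitivity of the (k,C)-median problem with respect to μ satisfies Σ_{x ∈ supp(μ)} μ(x)·sens(x) ≤ 4k + 6. -/
open Metric

/-- The cost of a center set `C'` for the `(k,C)`-median problem with respect to a
finitely supported probability measure `μ` : `cost_μ(C') = Σ_x μ(x)·d(x,C')`. -/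
noncomputable def kMedCost {X : Type*} [PseudoMetricSpace X] (μ : X →₀ ℝ)
    (C' : Finset X) : ℝ :=
  ∑ x ∈ μ.support, μ x * infDist x (C' : Set X)

/-- The sensitivity of a point `x` for the `(k,C)`-median problem with respect to `μ`:
`sens(x) = sup { d(x,C')/cost_μ(C') : C' ⊆ C, |C'| = k }`. -/
noncomputable def kMedSens {X : Type*} [PseudoMetricSpace X] (μ : X →₀ ℝ)
    (C : Set X) (k : ℕ) (x : X) : ℝ :=
  sSup {r : ℝ | ∃ C' : Finset X, ↑C' ⊆ C ∧ C'.card = k ∧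
    r = infDist x (C' : Set X) / kMedCost μ C'}

/-- total sensitivity of the `(k,C)`-median problem is at most `4k + 6`. -/
theorem total_sensitivity_le {X : Type*} [PseudoMetricSpace X] (C : Set X) (k : ℕ)
    (hk : 1 ≤ k) (μ : X →₀ ℝ) (hμ0 : ∀ x, 0 ≤ μ x)
    (hμ1 : ∑ x ∈ μ.support, μ x = 1)
    (hpos : ∀ C' : Finset X, ↑C' ⊆ C → C'.card = k → 0 < kMedCost μ C')
    (hatt : ∃ Cs : Finset X, ↑Cs ⊆ C ∧ Cs.card = k ∧
      ∀ C' : Finset X, ↑C' ⊆ C → C'.card = k → kMedCost μ Cs ≤ kMedCost μ C') :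
    ∑ x ∈ μ.support, μ x * kMedSens μ C k x ≤ 4 * k + 6 := by
  classical
  obtain ⟨Cs, hCs, hcard, hmin⟩ := hatt
  have hm := hpos Cs hCs hcard
  have hne : ∀ C' : Finset X, C'.card = k → (C' : Set X).Nonempty := by
    intro C' h
    rw [Finset.coe_nonempty, ← Finset.card_pos]
    omega
  have hf : ∀ x, ∃ c ∈ Cs, infDist x (Cs : Set X) = dist x c := by
    intro x
    obtain ⟨c, hc, h⟩ := Cs.finite_toSet.isCompact.exists_infDist_eq_dist (hne Cs hcard) x
    exact ⟨c, by simpa using hc, h⟩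
  choose f hfm hfd using hf
  set m := kMedCost μ Cs with hmdef
  set M : X → ℝ := fun c => ∑ y ∈ μ.support with f y = c, μ y with hM
  set S : X → ℝ := fun c => ∑ y ∈ μ.support with f y = c, μ y * infDist y (Cs : Set X) with hS
  have hM0 : ∀ c, 0 ≤ M c := fun c => Finset.sum_nonneg fun y _ => hμ0 y
  have hS0 : ∀ c, 0 ≤ S c := fun c =>
    Finset.sum_nonneg fun y _ => mul_nonneg (hμ0 y) infDist_nonneg
  have hMpos : ∀ x ∈ μ.support, 0 < M (f x) := by
    intro x hx
    have h1 : μ x ≤ M (f x) :=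
      Finset.single_le_sum (f := fun y => μ y) (fun y _ => hμ0 y) (by simp at hx ⊢; exact hx)
    have h2 : 0 < μ x := lt_of_le_of_ne (hμ0 x) (by simp at hx; exact fun h => hx h.symm)
    linarith
  have hsens : ∀ x ∈ μ.support, kMedSens μ C k x ≤
      infDist x (Cs : Set X) / m + (S (f x) / m + 1) / M (f x) := by
    intro x hx
    have hMx := hMpos x hx
    have hSx := hS0 (f x)
    have hdx : 0 ≤ infDist x (Cs : Set X) := infDist_nonneg
    apply Real.sSup_le _ (by positivity)
    rintro r ⟨C', hC', hk', rfl⟩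
    have hc := hpos C' hC' hk'
    have hmc := hmin C' hC' hk'
    have h1 : infDist x (C' : Set X) ≤ infDist x (Cs : Set X) + infDist (f x) (C' : Set X) := by
      rw [hfd x, add_comm]
      exact infDist_le_infDist_add_dist
    have h2 : M (f x) * infDist (f x) (C' : Set X) ≤ S (f x) + kMedCost μ C' := by
      have h3 : ∑ y ∈ μ.support with f y = f x, μ y * infDist y (C' : Set X) ≤ kMedCost μ C' :=
        Finset.sum_le_sum_of_subset_of_nonneg (Finset.filter_subset _ _)
          fun y _ _ => mul_nonneg (hμ0 y) infDist_nonneg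
      have h4 : M (f x) * infDist (f x) (C' : Set X) ≤
          S (f x) + ∑ y ∈ μ.support with f y = f x, μ y * infDist y (C' : Set X) := by
        rw [hM, hS, Finset.sum_mul, ← Finset.sum_add_distrib]
        apply Finset.sum_le_sum
        intro y hy
        rw [← mul_add]
        apply mul_le_mul_of_nonneg_left _ (hμ0 y)
        rw [← (Finset.mem_filter.1 hy).2, hfd y, dist_comm, add_comm]
        exact infDist_le_infDist_add_dist
      linarith
    have h5 : infDist (f x) (C' : Set X) ≤ (S (f x) + kMedCost μ C') / M (f x) := by
      rw [le_div_iff₀ hMx]; linarith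
    calc infDist x (C' : Set X) / kMedCost μ C'
        ≤ (infDist x (Cs : Set X) + (S (f x) + kMedCost μ C') / M (f x)) / kMedCost μ C' := by
          gcongr; linarith
      _ = infDist x (Cs : Set X) / kMedCost μ C' + (S (f x) / kMedCost μ C' + 1) / M (f x) := by
          field_simp
      _ ≤ _ := by gcongr
  have hA : ∑ x ∈ μ.support, μ x * (infDist x (Cs : Set X) / m) = 1 := by
    have : ∑ x ∈ μ.support, μ x * (infDist x (Cs : Set X) / m) = m / m := by
      rw [hmdef, kMedCost, Finset.sum_div]
      exact Finset.sum_congr rfl fun x _ => by rw [mul_div_assoc]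
    rw [this, div_self hm.ne']
  have hSsum : ∑ c ∈ Cs, S c = m :=
    Finset.sum_fiberwise_of_maps_to (fun x _ => hfm x) _
  have hB : ∑ x ∈ μ.support, μ x * ((S (f x) / m + 1) / M (f x)) ≤ 1 + k := by
    rw [← Finset.sum_fiberwise_of_maps_to (t := Cs) (g := f) (fun x _ => hfm x)]
    calc _ ≤ ∑ c ∈ Cs, (S c / m + 1) := by
          apply Finset.sum_le_sum
          intro c _
          have : ∑ x ∈ μ.support with f x = c, μ x * ((S (f x) / m + 1) / M (f x))
              = M c * ((S c / m + 1) / M c) := by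
            rw [hM, Finset.sum_mul]
            refine Finset.sum_congr rfl fun y hy => ?_
            rw [(Finset.mem_filter.1 hy).2]
          rw [this]
          have hc := hS0 c
          rcases (hM0 c).eq_or_lt with h | h
          · rw [← h, zero_mul]; positivity
          · rw [mul_div_cancel₀ _ h.ne']
      _ = 1 + k := by
          rw [Finset.sum_add_distrib, ← Finset.sum_div, hSsum, div_self hm.ne']
          simp [hcard]
  calc _ ≤ ∑ x ∈ μ.support, μ x * (infDist x (Cs : Set X) / m + (S (f x) / m + 1) / M (f x)) :=
        Finset.sum_le_sum fun x hx => mul_le_mul_of_nonneg_left (hsens x hx) (hμ0 x)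
    _ ≤ 1 + (1 + k) := by
        simp_rw [mul_add (μ _)]
        rw [Finset.sum_add_distrib, hA]
        linarith
    _ ≤ _ := by
        have : (0 : ℝ) ≤ k := by positivity
        linarith
end

section
/- Let (X,d) be a metric space, C ⊆ X, k ≥ 1 an integer, μ a probability measure on X with finite support, and α ≥ 1 a real number. Let c_1,…,c_t ∈ C be centers such that opt' := cost_μ({c_1,…,c_t}) satisfies 0 < opt' ≤ α·inf{cost_μ(C') : C' ⊆ C, |C'| = k}. Let v : supp(μ) → {1,…,t} assign to each point a nearest center, i.e. d(x,c_{v(x)}) = min_{1≤i≤t} d(x,c_i); for each i put μ_i = μ(v^{-1}(i)) and, when μ_i > 0, m_i = (1/μ_i)·Σ_{x : v(x)=i} μ(x)·d(x,c_i). Then for every x ∈ supp(μ), with i = v(x), the sensitivity satisfies sens(x) ≤ 2α·(2m_i + d(x,c_i))/opt' + 4/μ_i. -/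
open Metric

/-- pointwise sensitivity upper bound from a bicriteria approximation. -/
theorem sensitivity_upper_bound_of_bicriteria {X : Type*} [PseudoMetricSpace X]
    (C : Set X) (k : ℕ) (hk : 1 ≤ k) (μ : X →₀ ℝ) (hμ0 : ∀ x, 0 ≤ μ x)
    (hμ1 : ∑ x ∈ μ.support, μ x = 1) (α : ℝ) (hα : 1 ≤ α)
    (t : ℕ) (ht : 1 ≤ t) (c : Fin t → X) (hc : ∀ i, c i ∈ C)
    -- opt' is the cost of the bicriteria solution {c_1, ..., c_t}
    (hopt'pos : 0 < ∑ x ∈ μ.support, μ x * infDist x (Set.range c))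
    (hopt'le : ∑ x ∈ μ.support, μ x * infDist x (Set.range c) ≤
      α * sInf {r : ℝ | ∃ C' : Finset X, ↑C' ⊆ C ∧ C'.card = k ∧ r = kMedCost μ C'})
    -- v assigns each point of the support to a nearest center
    (v : X → Fin t)
    (hv : ∀ x ∈ μ.support, ∀ i : Fin t, dist x (c (v x)) ≤ dist x (c i)) :
    ∀ x ∈ μ.support,
      kMedSens μ C k x ≤
        2 * α * (2 * ((∑ y ∈ μ.support.filter (fun y => v y = v x), μ y * dist y (c (v x))) /
            (∑ y ∈ μ.support.filter (fun y => v y = v x), μ y)) + dist x (c (v x))) /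
          (∑ x ∈ μ.support, μ x * infDist x (Set.range c)) +
        4 / (∑ y ∈ μ.support.filter (fun y => v y = v x), μ y) := by
  intro x hx
  set O := ∑ x ∈ μ.support, μ x * infDist x (Set.range c) with hO
  set F := μ.support.filter (fun y => v y = v x) with hF
  set S := ∑ y ∈ F, μ y * dist y (c (v x)) with hS
  set M := ∑ y ∈ F, μ y with hM
  have hxF : x ∈ F := by simp [hF, Finsupp.mem_support_iff.mp hx]
  have hMpos : 0 < M := by
    have h1 : μ x ≤ M := Finset.single_le_sum (fun y _ => hμ0 y) hxF
    have h2 : 0 < μ x := lt_of_le_of_ne (hμ0 x) (Ne.symm (Finsupp.mem_support_iff.mp hx))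
    linarith
  have hS0 : 0 ≤ S := Finset.sum_nonneg (fun y _ => mul_nonneg (hμ0 y) dist_nonneg)
  have hm0 : 0 ≤ S / M := div_nonneg hS0 hMpos.le
  have hd0 : 0 ≤ dist x (c (v x)) := dist_nonneg
  have hcost0 : ∀ C' : Finset X, 0 ≤ kMedCost μ C' := fun C' =>
    Finset.sum_nonneg (fun y _ => mul_nonneg (hμ0 y) infDist_nonneg)
  have hα0 : 0 < α := by linarith
  unfold kMedSens
  apply Real.sSup_le
  · rintro r ⟨C', hC', hcard, rfl⟩
    set K := kMedCost μ C' with hK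
    have hOK : O ≤ α * K := by
      refine hopt'le.trans (mul_le_mul_of_nonneg_left (csInf_le ⟨0, ?_⟩ ⟨C', hC', hcard, rfl⟩) hα0.le)
      rintro r ⟨C'', -, -, rfl⟩
      exact hcost0 _
    have hKpos : 0 < K := by
      by_contra h
      nlinarith
    set D := infDist (c (v x)) (C' : Set X) with hD
    have hKM : M * D - S ≤ K := by
      have h1 : ∑ y ∈ F, μ y * infDist y (C' : Set X) ≤ K :=
        Finset.sum_le_sum_of_subset_of_nonneg (Finset.filter_subset _ _)
          (fun y _ _ => mul_nonneg (hμ0 y) infDist_nonneg)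
      have h2 : M * D - S ≤ ∑ y ∈ F, μ y * infDist y (C' : Set X) := by
        rw [hM, hS, Finset.sum_mul, ← Finset.sum_sub_distrib]
        apply Finset.sum_le_sum
        intro y _
        have h3 : D ≤ infDist y (C' : Set X) + dist (c (v x)) y := infDist_le_infDist_add_dist
        rw [dist_comm] at h3
        nlinarith [hμ0 y]
      linarith
    have hDle : D ≤ K / M + S / M := by
      rw [← add_div, le_div_iff₀ hMpos]
      linarith
    have hxle : infDist x (C' : Set X) ≤ D + dist x (c (v x)) := infDist_le_infDist_add_dist
    have hKinv : 1 / K ≤ α / O := by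
      rw [div_le_div_iff₀ hKpos hopt'pos]
      linarith
    calc infDist x (C' : Set X) / K ≤ (K / M + (S / M + dist x (c (v x)))) / K := by
          gcongr
          linarith
      _ = (S / M + dist x (c (v x))) * (1 / K) + 1 / M := by
          field_simp
          ring
      _ ≤ (2 * (2 * (S / M) + dist x (c (v x)))) * (α / O) + 4 / M := by
          gcongr
          · linarith
          · norm_num
      _ = _ := by ring
  · positivity
end

section
/- Let (X,d) be a metric space, C ⊆ X, k ≥ 1 an integer, μ a probability measure on X with finite support, and α, β ≥ 1 real numbers. Let c_1,…,c_t ∈ C with t ≤ β·k be centers such that opt' := cost_μ({c_1,…,c_t}) satisfies 0 < opt' ≤ α·inf{cost_μ(C') : C' ⊆ C, |C'| = k}. Let v : supp(μ) → {1,…,t} assign to each point a nearest center; put μ_i = μ(v^{-1}(i)) and, when μ_i > 0, m_i = (1/μ_i)·Σ_{x : v(x)=i} μ(x)·d(x,c_i). Define s(x) = 2α·(2m_{v(x)} + d(x,c_{v(x)}))/opt' + 4/μ_{v(x)} for x ∈ supp(μ). Then Σ_{x ∈ supp(μ)} μ(x)·s(x) ≤ 6α + 4βk. -/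
open Metric

theorem fiber_bound {X : Type*} {t : ℕ} (S : Finset X) (w : X → ℝ)
    (v : X → Fin t) (F : Fin t → ℝ) (hF : ∀ i, 0 ≤ F i) :
    ∑ x ∈ S, w x * (F (v x) / (∑ y ∈ S.filter (fun y => v y = v x), w y)) ≤ ∑ i, F i := by
  rw [← Finset.sum_fiberwise S v]
  refine Finset.sum_le_sum fun i _ => ?_
  have h : ∑ x ∈ S.filter (fun x => v x = i),
      w x * (F (v x) / (∑ y ∈ S.filter (fun y => v y = v x), w y)) =
      (∑ x ∈ S.filter (fun x => v x = i), w x) *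
        (F i / (∑ y ∈ S.filter (fun y => v y = i), w y)) := by
    rw [Finset.sum_mul]
    refine Finset.sum_congr rfl fun x hx => ?_
    rw [(Finset.mem_filter.mp hx).2]
  rw [h]
  by_cases h0 : ∑ x ∈ S.filter (fun x => v x = i), w x = 0
  · rw [h0]; simpa using hF i
  · rw [mul_div_cancel₀ _ h0]

/-- the total sensitivity upper bound obtained from an
`(α,β)`-bicriteria approximation is at most `6α + 4βk`. -/
theorem total_sensitivity_bound_of_bicriteria {X : Type*} [PseudoMetricSpace X]
    (C : Set X) (k : ℕ) (hk : 1 ≤ k) (μ : X →₀ ℝ) (hμ0 : ∀ x, 0 ≤ μ x)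
    (hμ1 : ∑ x ∈ μ.support, μ x = 1) (α β : ℝ) (hα : 1 ≤ α) (hβ : 1 ≤ β)
    (t : ℕ) (ht : 1 ≤ t) (htβk : (t : ℝ) ≤ β * k) (c : Fin t → X) (hc : ∀ i, c i ∈ C)
    -- opt' is the cost of the bicriteria solution {c_1, ..., c_t}
    (hopt'pos : 0 < ∑ x ∈ μ.support, μ x * infDist x (Set.range c))
    (hopt'le : ∑ x ∈ μ.support, μ x * infDist x (Set.range c) ≤
      α * sInf {r : ℝ | ∃ C' : Finset X, ↑C' ⊆ C ∧ C'.card = k ∧ r = kMedCost μ C'})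
    -- v assigns each point of the support to a nearest center
    (v : X → Fin t)
    (hv : ∀ x ∈ μ.support, ∀ i : Fin t, dist x (c (v x)) ≤ dist x (c i)) :
    ∑ x ∈ μ.support, μ x *
        (2 * α * (2 * ((∑ y ∈ μ.support.filter (fun y => v y = v x), μ y * dist y (c (v x))) /
            (∑ y ∈ μ.support.filter (fun y => v y = v x), μ y)) + dist x (c (v x))) /
          (∑ z ∈ μ.support, μ z * infDist z (Set.range c)) +
        4 / (∑ y ∈ μ.support.filter (fun y => v y = v x), μ y)) ≤
      6 * α + 4 * β * k := by
  have hd : ∀ x ∈ μ.support, infDist x (Set.range c) = dist x (c (v x)) := by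
    intro x hx
    refine le_antisymm (infDist_le_dist_of_mem (Set.mem_range_self (v x))) ?_
    refine (le_infDist (s := Set.range c) ⟨c (v x), v x, rfl⟩).2 ?_
    rintro _ ⟨i, rfl⟩
    exact hv x hx i
  have hO : ∑ x ∈ μ.support, μ x * infDist x (Set.range c) =
      ∑ x ∈ μ.support, μ x * dist x (c (v x)) :=
    Finset.sum_congr rfl fun x hx => by rw [hd x hx]
  rw [hO] at hopt'pos ⊢
  set O := ∑ x ∈ μ.support, μ x * dist x (c (v x)) with hOdef
  have h1 := fiber_bound μ.support μ v
    (fun i => ∑ y ∈ μ.support.filter (fun y => v y = i), μ y * dist y (c i))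
    (fun i => Finset.sum_nonneg fun y _ => mul_nonneg (hμ0 y) dist_nonneg)
  have h1' : ∑ i, ∑ y ∈ μ.support.filter (fun y => v y = i), μ y * dist y (c i) = O := by
    rw [hOdef, ← Finset.sum_fiberwise μ.support v]
    refine Finset.sum_congr rfl fun i _ => Finset.sum_congr rfl fun x hx => ?_
    rw [(Finset.mem_filter.mp hx).2]
  rw [h1'] at h1
  have h2 := fiber_bound μ.support μ v (fun _ => 4) (fun _ => by norm_num)
  have h2' : ∑ _i : Fin t, (4 : ℝ) = 4 * t := by simp [mul_comm]
  rw [h2'] at h2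
  beta_reduce at h1 h2
  have hsplit : ∀ x, μ x *
        (2 * α * (2 * ((∑ y ∈ μ.support.filter (fun y => v y = v x), μ y * dist y (c (v x))) /
            (∑ y ∈ μ.support.filter (fun y => v y = v x), μ y)) + dist x (c (v x))) / O +
        4 / (∑ y ∈ μ.support.filter (fun y => v y = v x), μ y)) =
      (4 * α / O) * (μ x *
        ((∑ y ∈ μ.support.filter (fun y => v y = v x), μ y * dist y (c (v x))) /
            (∑ y ∈ μ.support.filter (fun y => v y = v x), μ y))) +
      (2 * α / O) * (μ x * dist x (c (v x))) +
      μ x * (4 / (∑ y ∈ μ.support.filter (fun y => v y = v x), μ y)) := by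
    intro x; ring
  rw [Finset.sum_congr rfl fun x _ => hsplit x, Finset.sum_add_distrib,
    Finset.sum_add_distrib, ← Finset.mul_sum, ← Finset.mul_sum, ← hOdef]
  have h3 := mul_le_mul_of_nonneg_left h1 (show 0 ≤ 4 * α / O by positivity)
  have h4 : 4 * α / O * O = 4 * α := div_mul_cancel₀ _ hopt'pos.ne'
  have h5 : 2 * α / O * O = 2 * α := div_mul_cancel₀ _ hopt'pos.ne'
  linarith
end

section
/- There exists a constant c > 0 such that for all integers d, m, l ≥ 1 with l ≤ m, every integer n ≥ 2, all point sets P_1,…,P_n ∈ U^m, and all radii r_1,…,r_n > 0, the number of distinct sets {i ∈ {1,…,n} : d_H(Q,P_i) ≤ r_i}, as Q ranges over all nonempty finite subsets of ℝ^d of cardinality at most l, is at most n^{c·d·l·log₂(2 + m/d)}. In particular, the shattering dimension of the dual of the range space on U^l induced by Hausdorff metric balls centered at sets of U^m is O(d·l·log(m/d)). -/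
noncomputable section

/-- Points of `ℝ^d` with the Euclidean norm. -/
abbrev Pt (d : ℕ) := EuclideanSpace ℝ (Fin d)

/-- `U^m`: nonempty finite subsets of `ℝ^d` of cardinality at most `m`. -/
abbrev PtSet (d m : ℕ) := {P : Finset (Pt d) // P.Nonempty ∧ P.card ≤ m}


/-- Sauer-Shelah count: if all shattered sets have at most `D` elements. -/
theorem card_family_le {ι : Type*} [Fintype ι] [DecidableEq ι] (A : Finset (Finset ι)) (D : ℕ)
    (hD : ∀ s, A.Shatters s → s.card ≤ D) (x : ℝ) (hx : 1 ≤ x) :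
    (A.card : ℝ) ≤ x ^ D * Real.exp (Fintype.card ι / x) := by
  have hx0 : 0 < x := by linarith
  have h1 : (A.card : ℝ) ≤ (A.shatterer.card : ℝ) := by
    exact_mod_cast Finset.card_le_card_shatterer A
  have h2 : (A.shatterer.card : ℝ) ≤
      ∑ s ∈ (Finset.univ : Finset ι).powerset, x ^ D * ((1 / x) ^ s.card * 1 ^
        ((Finset.univ : Finset ι).card - s.card)) := by
    rw [Finset.cast_card]
    refine (Finset.sum_le_sum (f := fun _ => (1 : ℝ)) (fun s hs => ?_)).trans
      (Finset.sum_le_sum_of_subset_of_nonneg (s := A.shatterer) ?_ ?_)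
    · have hc := hD s (Finset.mem_shatterer.1 hs)
      have : x ^ D = x ^ (D - s.card) * x ^ s.card := by
        rw [← pow_add]; congr 1; omega
      rw [this, one_pow, mul_one, one_div, inv_pow, mul_assoc,
        mul_inv_cancel₀ (by positivity), mul_one]
      exact one_le_pow₀ hx
    · intro s _; simp
    · intro s _ _; positivity
  rw [← Finset.mul_sum, Finset.sum_pow_mul_eq_add_pow] at h2
  refine h1.trans (h2.trans ?_)
  gcongr
  calc (1 / x + 1) ^ (Finset.univ : Finset ι).card
      ≤ (Real.exp (1 / x)) ^ (Finset.univ : Finset ι).card := by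
        gcongr; exact Real.add_one_le_exp _
    _ = Real.exp (Fintype.card ι / x) := by
        rw [← Real.exp_nat_mul]; congr 1; rw [Finset.card_univ]; ring

/-- Sets of balls containing a common point: shattered sets are small. -/
theorem ball_shatter_le {d : ℕ} {ι : Type*} [Fintype ι] [DecidableEq ι] (p : ι → Pt d) (r : ι → ℝ)
    (hr : ∀ i, 0 < r i)
    (A : Finset (Finset ι)) (hA : ∀ s ∈ A, ∃ q : Pt d, ∀ i, i ∈ s ↔ dist q (p i) ≤ r i)
    (s : Finset ι) (hs : A.Shatters s) : s.card ≤ d + 2 := by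
  by_contra hcon
  push Not at hcon
  let v : s → Pt d × ℝ × ℝ := fun i => (p i, 1, ‖p i‖ ^ 2 - r i ^ 2)
  have hv : ¬ LinearIndependent ℝ v := by
    intro h
    have := h.fintype_card_le_finrank
    simp at this
    omega
  obtain ⟨g, hg, i0, hi0⟩ := Fintype.not_linearIndependent_iff.1 hv
  have key : ∀ g : s → ℝ, ∑ i, g i • v i = 0 → ∀ i0, 0 < g i0 → False := by
    intro g hg i0 hi0
    have e1 : ∑ i, g i • p i = 0 := by
      have := congrArg Prod.fst hg
      simpa [v, Prod.fst_sum] using this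
    have e2 : ∑ i, g i = 0 := by
      have := congrArg (fun z => z.2.1) hg
      simpa [v, Prod.fst_sum, Prod.snd_sum] using this
    have e3 : ∑ i : s, g i * (‖p i‖ ^ 2 - r i ^ 2) = 0 := by
      have := congrArg (fun z => z.2.2) hg
      simpa [v, Prod.fst_sum, Prod.snd_sum] using this
    obtain ⟨u, hu, hut⟩ := hs (t := (s.attach.filter (fun i => g i ≤ 0)).image Subtype.val) (by
      intro i hi
      simp only [Finset.mem_image] at hi
      obtain ⟨a, _, rfl⟩ := hi
      exact a.2)
    obtain ⟨q, hq⟩ := hA u hu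
    have hmem : ∀ i : s, dist q (p i) ≤ r i ↔ g i ≤ 0 := by
      intro i
      rw [← hq]
      have h3 : (i : ι) ∈ s ∩ u ↔ (i : ι) ∈ (s.attach.filter (fun i => g i ≤ 0)).image Subtype.val := by
        rw [hut]
      simpa using h3
    have hsum : ∑ i : s, g i * (dist q (p i) ^ 2 - r i ^ 2) = 0 := by
      have h4 : ∀ i : s, g i * (dist q (p i) ^ 2 - r i ^ 2) =
          g i * ‖q‖ ^ 2 - 2 * inner ℝ q (g i • p i) + g i * (‖p i‖ ^ 2 - r i ^ 2) := by
        intro i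
        rw [dist_eq_norm, norm_sub_sq_real, inner_smul_right]; ring
      rw [Finset.sum_congr rfl (fun i _ => h4 i), Finset.sum_add_distrib, Finset.sum_sub_distrib,
        ← Finset.sum_mul, ← Finset.mul_sum, ← inner_sum, e1, e2, e3]
      simp
    have hpos : 0 < ∑ i : s, g i * (dist q (p i) ^ 2 - r i ^ 2) := by
      refine Finset.sum_pos' (fun i _ => ?_) ⟨i0, Finset.mem_univ _, ?_⟩
      · by_cases h : g i ≤ 0
        · have h5 := (hmem i).2 h
          have h6 : dist q (p i) ^ 2 ≤ r i ^ 2 := by gcongr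
          nlinarith
        · have h5 := mt (hmem i).1 h
          push Not at h5 h
          have h6 : r i ^ 2 ≤ dist q (p i) ^ 2 := by
            have := (hr i).le
            gcongr
          nlinarith
      · have h5 := mt (hmem i0).1 (not_le.2 hi0)
        push Not at h5
        have h6 : r i0 ^ 2 < dist q (p i0) ^ 2 := by
          have := (hr i0).le
          gcongr
        exact mul_pos hi0 (by linarith)
    linarith
  rcases lt_or_gt_of_ne hi0 with h | h
  · refine key (fun i => - g i) ?_ i0 (by simpa using h)
    simp only [neg_smul, Finset.sum_neg_distrib, hg, neg_zero]
  · exact key g hg i0 h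

theorem hausdorff_le_iff {d : ℕ} (Q P : Finset (Pt d)) (hQ : Q.Nonempty) (hP : P.Nonempty)
    (r : ℝ) (hr : 0 < r) :
    Metric.hausdorffDist (↑Q : Set (Pt d)) (↑P : Set (Pt d)) ≤ r ↔
      (∀ q ∈ Q, ∃ p ∈ P, dist q p ≤ r) ∧ (∀ p ∈ P, ∃ q ∈ Q, dist q p ≤ r) := by
  constructor
  · intro h
    have aux : ∀ (A B : Finset (Pt d)), A.Nonempty → B.Nonempty →
        Metric.hausdorffDist (↑A : Set (Pt d)) (↑B : Set (Pt d)) ≤ r →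
        ∀ q ∈ A, ∃ p ∈ B, dist q p ≤ r := by
      intro A B hA hB h q hq
      obtain ⟨p, hp, hpe⟩ := B.finite_toSet.isCompact.exists_infDist_eq_dist (by simpa using hB) q
      refine ⟨p, hp, ?_⟩
      rw [← hpe]
      refine le_trans (Metric.infDist_le_hausdorffDist_of_mem (s := (↑A : Set (Pt d)))
        (by simpa using hq) ?_) h
      exact Metric.hausdorffEDist_ne_top_of_nonempty_of_bounded (by simpa using hA)
        (by simpa using hB) A.finite_toSet.isBounded B.finite_toSet.isBounded
    refine ⟨aux Q P hQ hP h, fun p hp => ?_⟩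
    obtain ⟨q, hq, h⟩ := aux P Q hP hQ (by rwa [Metric.hausdorffDist_comm]) p hp
    exact ⟨q, hq, by rwa [dist_comm]⟩
  · rintro ⟨h1, h2⟩
    refine Metric.hausdorffDist_le_of_mem_dist hr.le h1 (fun p hp => ?_)
    obtain ⟨q, hq, h⟩ := h2 p hp
    exact ⟨q, hq, by rwa [dist_comm]⟩

theorem exists_fin_enum {α : Type*} (Q : Finset α) (hQ : Q.Nonempty) (l : ℕ) (h : Q.card ≤ l) :
    ∃ f : Fin l → α, ∀ x, x ∈ Q ↔ ∃ j, f j = x := by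
  obtain ⟨x0, hx0⟩ := hQ
  let e := Q.equivFin
  refine ⟨fun j => if hj : (j : ℕ) < Q.card then (e.symm ⟨j, hj⟩ : α) else x0, fun x => ⟨?_, ?_⟩⟩
  · intro hx
    refine ⟨⟨e ⟨x, hx⟩, (e ⟨x, hx⟩).2.trans_le h⟩, ?_⟩
    simp
  · rintro ⟨j, rfl⟩
    dsimp only
    split_ifs
    · exact Subtype.property _
    · exact hx0

theorem final_bound (d m l n : ℕ) (hd : 1 ≤ d) (hn : 2 ≤ n) (a N : ℝ)
    (ha0 : 0 ≤ a) (hN : N ≤ n * m)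
    (ha : a ≤ (n * (2 + (m : ℝ) / d)) ^ (d + 2) * Real.exp (N / (n * (2 + (m : ℝ) / d)))) :
    a ^ l ≤ (n : ℝ) ^ ((12 : ℝ) * d * l * Real.logb 2 (2 + (m : ℝ) / (d : ℝ))) := by
  have hd' : (1 : ℝ) ≤ d := by exact_mod_cast hd
  have hn' : (2 : ℝ) ≤ n := by exact_mod_cast hn
  have hm' : (0 : ℝ) ≤ m := by positivity
  set y : ℝ := 2 + (m : ℝ) / d with hy
  have hy2 : 2 ≤ y := by
    have : (0 : ℝ) ≤ (m : ℝ) / d := by positivity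
    linarith
  have hmd : (m : ℝ) ≤ d * y := by
    rw [hy, mul_add, mul_div_cancel₀ _ (by positivity)]; nlinarith
  set L := Real.logb 2 y with hL
  have hL1 : 1 ≤ L := by
    rw [hL, Real.le_logb_iff_rpow_le (by norm_num) (by linarith)]; simpa using hy2
  have hyL : y ≤ (n : ℝ) ^ L := by
    calc y = (2 : ℝ) ^ L := by
          rw [hL, Real.rpow_logb (by norm_num) (by norm_num) (by linarith)]
      _ ≤ (n : ℝ) ^ L := by gcongr
  have hex : Real.exp (N / (n * y)) ≤ (n : ℝ) ^ ((2 : ℝ) * (d + 2)) := by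
    have h1 : N / (n * y) ≤ d + 2 := by
      rw [div_le_iff₀ (by positivity)]
      have : (n : ℝ) * m ≤ n * (d * y) := by gcongr
      have h0 : 0 ≤ (n : ℝ) * y := by positivity
      nlinarith
    calc Real.exp (N / (n * y)) ≤ Real.exp (d + 2) := Real.exp_le_exp.2 h1
      _ = Real.exp 1 ^ ((d : ℝ) + 2) := by rw [← Real.exp_mul, one_mul]
      _ ≤ ((n : ℝ) ^ (2 : ℝ)) ^ ((d : ℝ) + 2) := by
          gcongr
          rw [Real.rpow_two]
          have := Real.exp_one_lt_d9
          nlinarith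
      _ = _ := by rw [← Real.rpow_mul (by positivity)]
  have hpw : ((n : ℝ) * y) ^ (d + 2) ≤ (n : ℝ) ^ ((1 + L) * (d + 2)) := by
    calc ((n : ℝ) * y) ^ (d + 2) ≤ ((n : ℝ) ^ (1 + L)) ^ (d + 2) := by
          gcongr
          rw [Real.rpow_add (by positivity), Real.rpow_one]
          gcongr
      _ = _ := by
          rw [← Real.rpow_natCast, ← Real.rpow_mul (by positivity)]; push_cast; rfl
  have hal : a ≤ (n : ℝ) ^ (12 * d * L) := by
    refine ha.trans ((mul_le_mul hpw hex (by positivity) (by positivity)).trans ?_)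
    rw [← Real.rpow_add (by positivity)]
    apply Real.rpow_le_rpow_of_exponent_le (by linarith)
    nlinarith [mul_nonneg (sub_nonneg.2 hd') (sub_nonneg.2 hL1)]
  calc a ^ l ≤ ((n : ℝ) ^ (12 * d * L)) ^ l := by gcongr
    _ = _ := by
      rw [← Real.rpow_natCast, ← Real.rpow_mul (by positivity)]; congr 1; ring

/-- the number of distinct patterns that point sets with at most `l` points
realize on `n` Hausdorff metric balls centered at sets of `U^m` is at most
`n^{c·d·l·log₂(2 + m/d)}`; i.e. the dual shattering dimension is `O(d·l·log(m/d))`. -/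
theorem hausdorff_dual_shattering_dimension :
    ∃ c : ℝ, 0 < c ∧
      ∀ d m l n : ℕ, 1 ≤ d → 1 ≤ m → 1 ≤ l → l ≤ m → 2 ≤ n →
      ∀ (P : Fin n → PtSet d m) (r : Fin n → ℝ),
      (∀ i, 0 < r i) →
      (Set.ncard {s : Set (Fin n) | ∃ Q : Finset (Pt d), Q.Nonempty ∧ Q.card ≤ l ∧
          s = {i | Metric.hausdorffDist (↑Q : Set (Pt d)) (↑(P i).1 : Set (Pt d)) ≤ r i}} : ℝ) ≤
        (n : ℝ) ^ (c * d * l * Real.logb 2 (2 + (m : ℝ) / (d : ℝ))) := by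
  classical
  refine ⟨12, by norm_num, ?_⟩
  intro d m l n hd hm hl hlm hn P r hr
  let ι := Σ i : Fin n, {x // x ∈ (P i).1}
  let F : Pt d → Finset ι := fun q => Finset.univ.filter (fun k => dist q k.2.1 ≤ r k.1)
  let A : Finset (Finset ι) := Finset.univ.filter (fun s => ∃ q, F q = s)
  have hAc := card_family_le A (d + 2)
    (ball_shatter_le (fun k : ι => k.2.1) (fun k => r k.1) (fun k => hr k.1) A (by
      intro s hs
      obtain ⟨q, rfl⟩ := (Finset.mem_filter.1 hs).2
      exact ⟨q, fun i => by simp [F]⟩)) (n * (2 + (m : ℝ) / d)) (by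
      have hn' : (2 : ℝ) ≤ n := by exact_mod_cast hn
      have : (0 : ℝ) ≤ (m : ℝ) / d := by positivity
      nlinarith)
  have hN : (Fintype.card ι : ℝ) ≤ n * m := by
    have : Fintype.card ι ≤ n * m := by
      rw [Fintype.card_sigma]
      refine (Finset.sum_le_card_nsmul _ _ m (fun i _ => ?_)).trans (by simp)
      simpa using (P i).2.2
    exact_mod_cast this
  refine le_trans ?_ (final_bound d m l n hd hn A.card _ (by positivity) hN hAc)
  let G : (Fin l → {s // s ∈ A}) → Set (Fin n) := fun a =>
    {i | (∀ j, ∃ p : {x // x ∈ (P i).1}, (⟨i, p⟩ : ι) ∈ (a j).1) ∧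
      ∀ p : {x // x ∈ (P i).1}, ∃ j, (⟨i, p⟩ : ι) ∈ (a j).1}
  have hsub : {s : Set (Fin n) | ∃ Q : Finset (Pt d), Q.Nonempty ∧ Q.card ≤ l ∧
      s = {i | Metric.hausdorffDist (↑Q : Set (Pt d)) (↑(P i).1 : Set (Pt d)) ≤ r i}} ⊆
      Set.range G := by
    rintro s ⟨Q, hQ, hQl, rfl⟩
    obtain ⟨f, hf⟩ := exists_fin_enum Q hQ l hQl
    refine ⟨fun j => ⟨F (f j), by simp [A]⟩, ?_⟩
    ext i
    simp only [Set.mem_setOf_eq, G]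
    rw [hausdorff_le_iff Q (P i).1 hQ (P i).2.1 (r i) (hr i)]
    simp [F, hf]
  have h1 := Set.ncard_le_ncard hsub (Set.finite_range G)
  have h2 : (Set.range G).ncard ≤ A.card ^ l := by
    rw [← Set.image_univ]
    refine (Set.ncard_image_le (Set.finite_univ)).trans ?_
    rw [Set.ncard_univ, Nat.card_eq_fintype_card]
    simp
  exact_mod_cast h1.trans h2
end
end

section
/- For every δ > 0 there exists a constant c = c(δ) > 0 with the following property. For all integers d, k, l, m ≥ 1 with l ≤ m, every ε ∈ (0,1), and every finite family P = {Q_1,…,Q_n} of nonempty finite subsets of ℝ^d each of cardinality at most m, there exist an integer N ≤ c·(k³·l·m^δ·d/ε²)·(1 + log(k·l/ε)), indices i_1,…,i_N ∈ {1,…,n} (repetitions allowed), and weights ω_1,…,ω_N > 0, such that for every family C' of k nonempty finite subsets of ℝ^d each of cardinality at most l, Σ_{j=1}^N ω_j·d_H(Q_{i_j}, C') lies in the interval [(1−ε)·A, (1+ε)·A], where A = (1/n)·Σ_{i=1}^n d_H(Q_i, C') and d_H(Q, C') = min_{Q'∈C'} d_H(Q, Q'). -/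
noncomputable section

namespace HC
open Finset
open scoped Classical

/-- sign of a boolean -/
def sg (b : Bool) : ℝ := if b then 1 else -1

lemma rademacher_mgf (p : ℕ) (a : Fin p → ℝ) (ha : ∀ i, |a i| ≤ 1) (lam : ℝ) :
    ∑ σ : Fin p → Bool, Real.exp (lam * ∑ i, sg (σ i) * a i) ≤
      2 ^ p * Real.exp (lam ^ 2 * p / 2) := by
  have h1 : ∀ σ : Fin p → Bool, Real.exp (lam * ∑ i, sg (σ i) * a i) =
      ∏ i, Real.exp (lam * (sg (σ i) * a i)) := by
    intro σ
    rw [Finset.mul_sum, Real.exp_sum]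
  simp_rw [h1]
  have h2 := (Finset.prod_univ_sum (fun _ : Fin p => (Finset.univ : Finset Bool))
    (fun i b => Real.exp (lam * (sg b * a i))))
  rw [Fintype.piFinset_univ] at h2
  rw [← h2]
  have h3 : ∀ i ∈ (Finset.univ : Finset (Fin p)),
      ∑ b : Bool, Real.exp (lam * (sg b * a i)) ≤ 2 * Real.exp (lam ^ 2 / 2) := by
    intro i _
    have h4 := Real.cosh_le_exp_half_sq (lam * a i)
    have h5 : (lam * a i) ^ 2 ≤ lam ^ 2 := by
      rw [mul_pow]
      have : a i ^ 2 ≤ 1 := by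
        have := ha i
        rw [← sq_abs]
        have h0 := abs_nonneg (a i)
        nlinarith
      nlinarith [sq_nonneg lam]
    have h6 : Real.exp ((lam * a i) ^ 2 / 2) ≤ Real.exp (lam ^ 2 / 2) :=
      Real.exp_le_exp.2 (by linarith)
    rw [Real.cosh_eq] at h4
    simp only [Fintype.sum_bool, sg]
    simp only [if_true, Bool.false_eq_true, if_false, one_mul, neg_mul, mul_neg]
    linarith
  refine (Finset.prod_le_prod (fun i _ => by positivity) h3).trans ?_
  rw [Finset.prod_const, mul_pow, ← Real.exp_nat_mul]
  simp only [card_univ, Fintype.card_fin]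
  apply le_of_eq
  congr 2
  ring

lemma rademacher {κ : Type*} (p : ℕ) (hp : 0 < p) (S : Finset κ) (a : κ → Fin p → ℝ)
    (ha : ∀ s ∈ S, ∀ i, |a s i| ≤ 1) (b : ℝ) (hb : 0 < b) (hS : 2 * (S.card : ℝ) ≤ Real.exp b) :
    ∃ σ : Fin p → Bool, ∀ s ∈ S, |∑ i, sg (σ i) * a s i| ≤ Real.sqrt (2 * p * b) := by
  have hp' : (0 : ℝ) < p := by exact_mod_cast hp
  set lam := Real.sqrt (2 * b / p) with hlam
  have hl : 0 < lam := Real.sqrt_pos.2 (by positivity)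
  have hl2 : lam ^ 2 = 2 * b / p := Real.sq_sqrt (by positivity)
  set F : (Fin p → Bool) → ℝ := fun σ => ∑ s ∈ S, (Real.exp (lam * ∑ i, sg (σ i) * a s i) +
    Real.exp (-lam * ∑ i, sg (σ i) * a s i)) with hF
  have hsum : ∑ σ, F σ ≤ ∑ _σ : Fin p → Bool, Real.exp (2 * b) := by
    simp only [hF]
    rw [Finset.sum_comm]
    have : ∀ s ∈ S, ∑ σ : Fin p → Bool, (Real.exp (lam * ∑ i, sg (σ i) * a s i) +
        Real.exp (-lam * ∑ i, sg (σ i) * a s i)) ≤ 2 * (2 ^ p * Real.exp b) := by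
      intro s hs
      rw [Finset.sum_add_distrib]
      have h1 := rademacher_mgf p (a s) (ha s hs) lam
      have h2 := rademacher_mgf p (a s) (ha s hs) (-lam)
      have h3 : lam ^ 2 * p / 2 = b := by rw [hl2]; field_simp
      rw [neg_sq] at h2
      rw [h3] at h1 h2
      linarith
    refine (Finset.sum_le_sum this).trans ?_
    simp only [sum_const, nsmul_eq_mul, card_univ, Fintype.card_pi, Fintype.card_bool,
      prod_const, Fintype.card_fin, Nat.cast_pow, Nat.cast_ofNat]
    have : Real.exp (2 * b) = Real.exp b * Real.exp b := by rw [← Real.exp_add]; ring_nf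
    rw [this]
    have h4 : (0:ℝ) < 2 ^ p * Real.exp b := by positivity
    nlinarith
  obtain ⟨σ, -, hσ⟩ := Finset.exists_le_of_sum_le (Finset.univ_nonempty) hsum
  refine ⟨σ, fun s hs => ?_⟩
  have h1 : Real.exp (lam * ∑ i, sg (σ i) * a s i) +
    Real.exp (-lam * ∑ i, sg (σ i) * a s i) ≤ Real.exp (2 * b) := by
    refine le_trans ?_ hσ
    exact Finset.single_le_sum (f := fun s => Real.exp (lam * ∑ i, sg (σ i) * a s i) +
      Real.exp (-lam * ∑ i, sg (σ i) * a s i)) (fun s _ => by positivity) hs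
  set x := ∑ i, sg (σ i) * a s i
  have h2 : lam * x ≤ 2 * b := Real.exp_le_exp.1
    (by linarith [Real.exp_pos (-lam * x)])
  have h3 : -lam * x ≤ 2 * b := Real.exp_le_exp.1
    (by linarith [Real.exp_pos (lam * x)])
  have h4 : lam * |x| ≤ 2 * b := by
    rcases abs_cases x with ⟨h, _⟩ | ⟨h, _⟩ <;> rw [h] <;> linarith
  have h5 : lam * Real.sqrt (2 * p * b) = 2 * b := by
    rw [hlam, ← Real.sqrt_mul (by positivity)]
    rw [show 2 * b / p * (2 * p * b) = (2 * b) ^ 2 by field_simp]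
    exact Real.sqrt_sq (by positivity)
  exact le_of_mul_le_mul_left (by linarith) hl

lemma halving {α : Type*} (Y : Finset α) (p : ℕ) (hp : 0 < p) (hY : Y.card = 2 * p)
    (S : Finset (Finset α)) (b : ℝ) (hb : 0 < b) (hS : 2 * (S.card : ℝ) ≤ Real.exp b) :
    ∃ Y' ⊆ Y, Y'.card = p ∧ ∀ (R : α → Prop), Y.filter R ∈ S →
      |2 * ((Y'.filter R).card : ℝ) - ((Y.filter R).card : ℝ)| ≤ Real.sqrt (2 * p * b) := by
  have hc : Fintype.card (Fin p × Bool) = Fintype.card Y := by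
    simp [hY, mul_comm]
  let e : Fin p × Bool ≃ Y := Fintype.equivOfCardEq hc
  obtain ⟨σ, hσ⟩ := rademacher p hp S
    (fun A i => (if (e (i, true) : α) ∈ A then (1:ℝ) else 0) -
      (if (e (i, false) : α) ∈ A then (1:ℝ) else 0))
    (by intro s _ i; split_ifs <;> simp) b hb hS
  have hinj : Function.Injective (fun i : Fin p => (e (i, σ i) : α)) := by
    intro i j hij
    have := e.injective (Subtype.ext hij)
    exact (Prod.mk.inj this).1
  refine ⟨Finset.univ.image (fun i : Fin p => (e (i, σ i) : α)), ?_, ?_, ?_⟩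
  · intro x hx
    obtain ⟨i, -, rfl⟩ := Finset.mem_image.1 hx
    exact (e (i, σ i)).2
  · rw [Finset.card_image_of_injective _ hinj]; simp
  · intro R hR
    have h := hσ _ hR
    have h1 : (((Finset.univ.image (fun i : Fin p => (e (i, σ i) : α))).filter R).card : ℝ) =
        ∑ i : Fin p, if R (e (i, σ i)) then (1:ℝ) else 0 := by
      rw [Finset.card_filter]
      push_cast
      rw [Finset.sum_image (fun i _ j _ h => hinj h)]
    have h2 : ((Y.filter R).card : ℝ) = ∑ i : Fin p, ((if R (e (i, true)) then (1:ℝ) else 0) +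
        if R (e (i, false)) then (1:ℝ) else 0) := by
      rw [Finset.card_filter]
      push_cast
      rw [← Finset.sum_coe_sort Y (fun x => if R x then (1:ℝ) else 0),
        ← e.sum_comp (fun x : Y => if R x then (1:ℝ) else 0), Fintype.sum_prod_type]
      apply Finset.sum_congr rfl
      intro i _
      rw [Fintype.sum_bool]
    rw [h1, h2, Finset.mul_sum, ← Finset.sum_sub_distrib]
    convert h using 2
    apply Finset.sum_congr rfl
    intro i _
    have h3 : ∀ b, ((e (i, b) : α) ∈ Y.filter R) ↔ R (e (i, b)) := by
      intro b
      simp only [Finset.mem_filter, (e (i, b)).2, true_and]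
    simp only [h3, sg]
    cases σ i <;> simp only [Bool.false_eq_true, if_false, if_true] <;> ring

/-- iterated halving -/
lemma iterate_halving {α P : Type*} (R : P → α → Prop) (N : ℕ) (hN : 0 < N) (B : ℝ) (hB : 0 < B)
    (hG : ∀ (j : ℕ) (Y : Finset α), Y.card = N * 2 ^ j → ∃ S : Finset (Finset α),
      2 * (S.card : ℝ) ≤ Real.exp (B * (1 + j)) ∧ ∀ p, Y.filter (R p) ∈ S) (L : ℕ) :
    ∀ Y : Finset α, Y.card = N * 2 ^ L → ∃ Y' ⊆ Y, Y'.card = N ∧ ∀ p,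
      |((Y'.filter (R p)).card : ℝ) / N - ((Y.filter (R p)).card : ℝ) / (N * 2 ^ L)| ≤
        12 * (1 - (3 / 4) ^ L) * Real.sqrt (B / N) := by
  induction L with
  | zero =>
    intro Y hY
    exact ⟨Y, subset_rfl, by simpa using hY, fun p => by simp⟩
  | succ L ih =>
    intro Y hY
    have hN' : (0:ℝ) < N := by exact_mod_cast hN
    obtain ⟨S, hS, hSR⟩ := hG (L + 1) Y hY
    obtain ⟨Y1, hY1, hc1, hd1⟩ := halving Y (N * 2 ^ L) (by positivity)
      (by rw [hY]; ring) S _ (by positivity) hS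
    obtain ⟨Y2, hY2, hc2, hd2⟩ := ih Y1 hc1
    refine ⟨Y2, hY2.trans hY1, hc2, fun p => ?_⟩
    have h1 := hd1 (R p) (hSR p)
    have h2 := hd2 p
    set x2 : ℝ := ((Y2.filter (R p)).card : ℝ)
    set x1 : ℝ := ((Y1.filter (R p)).card : ℝ)
    set x0 : ℝ := ((Y.filter (R p)).card : ℝ)
    have h3 : |x1 / (N * 2 ^ L) - x0 / (N * 2 ^ (L + 1))| ≤
        3 * (3 / 4) ^ L * Real.sqrt (B / N) := by
      have e1 : x1 / (N * 2 ^ L) - x0 / (N * 2 ^ (L + 1)) = (2 * x1 - x0) / (N * 2 ^ (L + 1)) := by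
        rw [pow_succ]; field_simp
      rw [e1, abs_div, abs_of_pos (show (0:ℝ) < N * 2 ^ (L + 1) by positivity),
        div_le_iff₀ (by positivity)]
      refine h1.trans ?_
      apply Real.sqrt_le_iff.2
      refine ⟨by positivity, ?_⟩
      have e2 : (3 * (3 / 4) ^ L * Real.sqrt (B / N) * (N * 2 ^ (L + 1))) ^ 2 =
          36 * B * N * (9 / 4) ^ L := by
        rw [show (3 * (3 / 4 : ℝ) ^ L * Real.sqrt (B / N) * (N * 2 ^ (L + 1))) ^ 2 =
          9 * ((3/4 : ℝ) ^ 2) ^ L * (Real.sqrt (B / N)) ^ 2 * (N ^ 2 * (4 * (2 ^ 2) ^ L)) by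
            rw [← pow_mul, ← pow_mul]; ring,
          Real.sq_sqrt (by positivity), show (9/4:ℝ) ^ L = ((3/4 : ℝ) ^ 2) ^ L * (2 ^ 2) ^ L by
            rw [← mul_pow]; norm_num]
        field_simp
        ring
      rw [e2]
      push_cast
      have e3 : (1 : ℝ) + L * (1 / 8) ≤ (1 + 1 / 8) ^ L := by
        have := one_add_mul_le_pow (show (-2:ℝ) ≤ 1 / 8 by norm_num) L
        exact this
      have e4 : (9 / 4 : ℝ) ^ L = (1 + 1 / 8) ^ L * 2 ^ L := by rw [← mul_pow]; norm_num
      rw [e4]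
      have e5 : (1 + ((L:ℝ) + 1)) ≤ 18 * (1 + 1 / 8) ^ L := by
        have : (0:ℝ) ≤ L := by positivity
        linarith
      have e6 : (0:ℝ) < 2 * (N * 2 ^ L) * B := by positivity
      nlinarith [mul_le_mul_of_nonneg_left e5 e6.le]
    have h4 : x2 / N - x0 / (N * 2 ^ (L + 1)) =
      (x2 / N - x1 / (N * 2 ^ L)) + (x1 / (N * 2 ^ L) - x0 / (N * 2 ^ (L + 1))) := by ring
    rw [h4]
    refine (abs_add_le _ _).trans ((add_le_add h2 h3).trans (le_of_eq ?_))
    rw [pow_succ]; ring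

lemma layer_cake {α : Type*} (X : Finset α) (w g : α → ℝ) (B η : ℝ)
    (hg : ∀ x ∈ X, 0 ≤ g x ∧ g x ≤ B) (hB : 0 ≤ B)
    (h : ∀ r, 0 ≤ r → |∑ x ∈ X, if r < g x then w x else 0| ≤ η) :
    |∑ x ∈ X, w x * g x| ≤ η * B := by
  have hint : ∀ x, IntervalIntegrable (fun r => if r < g x then w x else 0) MeasureTheory.volume 0 B := by
    intro x
    have : AntitoneOn (fun r => if r < g x then (1:ℝ) else 0) (Set.uIcc 0 B) := by
      intro a _ b _ hab
      dsimp only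
      split_ifs with h1 h2 <;> first | exact le_rfl | (exfalso; linarith) | norm_num
    have := this.intervalIntegrable.const_mul (w x) (μ := MeasureTheory.volume)
    simpa using this
  have hval : ∀ x ∈ X, ∫ r in (0:ℝ)..B, (if r < g x then w x else 0) = w x * g x := by
    intro x hx
    obtain ⟨h0, h1⟩ := hg x hx
    have hs := intervalIntegral.integral_add_adjacent_intervals (μ := MeasureTheory.volume)
      (f := fun r => if r < g x then w x else 0) (a := 0) (b := g x) (c := B)
      ((hint x).mono_set (by rw [Set.uIcc_of_le h0, Set.uIcc_of_le hB]; exact Set.Icc_subset_Icc le_rfl h1))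
      ((hint x).mono_set (by rw [Set.uIcc_of_le h1, Set.uIcc_of_le hB]; exact Set.Icc_subset_Icc h0 le_rfl))
    rw [← hs]
    have i1 : ∫ r in (0:ℝ)..(g x), (if r < g x then w x else 0) = ∫ r in (0:ℝ)..(g x), w x := by
      apply intervalIntegral.integral_congr_ae
      have : ∀ᵐ r : ℝ, r ≠ g x := by
        simp [MeasureTheory.ae_iff]
      filter_upwards [this] with r hr hr2
      rw [Set.uIoc_of_le h0] at hr2
      rw [if_pos (lt_of_le_of_ne hr2.2 hr)]
    have i2 : ∫ r in (g x)..B, (if r < g x then w x else 0) = ∫ r in (g x)..B, (0:ℝ) := by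
      apply intervalIntegral.integral_congr
      intro r hr
      rw [Set.uIcc_of_le h1] at hr
      simp [not_lt.2 hr.1]
    rw [i1, i2]
    simp [mul_comm]
  rw [← Finset.sum_congr rfl hval, ← intervalIntegral.integral_finsetSum (fun x _ => hint x)]
  have := intervalIntegral.norm_integral_le_of_norm_le_const (a := 0) (b := B) (C := η)
    (f := fun r => ∑ x ∈ X, if r < g x then w x else 0) (by
      intro r hr
      rw [Set.uIoc_of_le hB] at hr
      exact h r hr.1.le)
  simpa [abs_of_nonneg hB] using this

/-- The halfspace family. -/
def hs {Z J : Type*} [Fintype Z] [Fintype J] (φ : Z → J → ℝ) : Finset (Finset Z) :=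
  Finset.univ.filter (fun A => ∃ w : J → ℝ, ∀ z, z ∈ A ↔ ∑ j, w j * φ z j ≤ 0)

lemma hs_shatter {Z J : Type*} [Fintype Z] [Fintype J] (φ : Z → J → ℝ) (s : Finset Z)
    (h : (hs φ).Shatters s) : s.card ≤ Fintype.card J := by
  by_contra hlt
  push Not at hlt
  have hli : ¬ LinearIndependent ℝ (fun z : s => φ z) := by
    intro hl
    have := hl.fintype_card_le_finrank
    simp at this
    omega
  rw [Fintype.not_linearIndependent_iff] at hli
  obtain ⟨g, hg, i, hi⟩ := hli
  have key : ∀ g : s → ℝ, ∑ i, g i • φ i = 0 → ∀ i, 0 < g i → False := by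
    intro g hg i hi
    set A : Finset Z := s.filter (fun z => ∃ hz : z ∈ s, g ⟨z, hz⟩ ≤ 0)
    obtain ⟨u, hu, hsu⟩ := h (show A ⊆ s from Finset.filter_subset _ _)
    obtain ⟨w, hw⟩ := (Finset.mem_filter.1 hu).2
    have h1 : ∀ z : s, (∑ j, w j * φ z j ≤ 0 ↔ g z ≤ 0) := by
      intro z
      rw [← hw]
      have : (z : Z) ∈ s ∩ u ↔ (z : Z) ∈ A := by rw [hsu]
      simp only [Finset.mem_inter, z.2, true_and, A, Finset.mem_filter, exists_true_left] at this
      exact this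
    have h2 : ∑ z : s, g z * ∑ j, w j * φ z j = 0 := by
      have : ∀ j, ∑ z : s, g z * φ z j = 0 := by
        intro j
        have := congrFun hg j
        simpa [Finset.sum_apply] using this
      simp_rw [Finset.mul_sum]
      rw [Finset.sum_comm]
      apply Finset.sum_eq_zero
      intro j _
      have := this j
      calc ∑ z : s, g z * (w j * φ z j) = w j * ∑ z : s, g z * φ z j := by
            rw [Finset.mul_sum]; apply Finset.sum_congr rfl; intros; ring
        _ = 0 := by rw [this, mul_zero]
    have h3 : 0 < ∑ z : s, g z * ∑ j, w j * φ z j := by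
      apply Finset.sum_pos'
      · intro z _
        by_cases hz : g z ≤ 0
        · exact mul_nonneg_of_nonpos_of_nonpos hz ((h1 z).2 hz)
        · have := mt (h1 z).1 hz
          push Not at hz this
          positivity
      · refine ⟨i, Finset.mem_univ _, ?_⟩
        have := mt (h1 i).1 (not_le.2 hi)
        push Not at this
        positivity
    linarith
  rcases lt_or_gt_of_ne hi with h' | h'
  · refine key (-g) ?_ i (by simpa using h')
    simp only [Pi.neg_apply, neg_smul, Finset.sum_neg_distrib, hg, neg_zero]
  · exact key g hg i h'

lemma hs_card {Z J : Type*} [Fintype Z] [Fintype J] (φ : Z → J → ℝ) (x : ℝ)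
    (hJ : 0 < Fintype.card J)
    (hx : (Fintype.card J : ℝ) ≤ x) (hZ : (Fintype.card Z : ℝ) ≤ x) :
    ((hs φ).card : ℝ) ≤ (Real.exp 1 * x / Fintype.card J) ^ (Fintype.card J) := by
  set D := Fintype.card J
  set n := Fintype.card Z
  have hD : (0:ℝ) < D := by exact_mod_cast hJ
  have hx0 : 0 < x := by linarith
  have h1 : (hs φ).card ≤ ∑ j ∈ Finset.Iic D, n.choose j := by
    refine (Finset.card_le_card_shatterer _).trans (Finset.card_shatterer_le_sum_vcDim.trans ?_)
    apply Finset.sum_le_sum_of_subset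
    apply Finset.Iic_subset_Iic.2
    unfold Finset.vcDim
    apply Finset.sup_le
    intro s hs'
    exact hs_shatter φ s (Finset.mem_shatterer.1 hs')
  have h2 : ((hs φ).card : ℝ) ≤ ∑ j ∈ Finset.Iic D, (n.choose j : ℝ) := by exact_mod_cast h1
  refine h2.trans ?_
  have h3 : ∀ j ∈ Finset.Iic D, (n.choose j : ℝ) ≤ (x / D) ^ D * ((D / x) ^ j * n.choose j) := by
    intro j hj
    have hj' : j ≤ D := Finset.mem_Iic.1 hj
    have : (1:ℝ) ≤ (x / D) ^ D * (D / x) ^ j := by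
      have e : (x / (D:ℝ)) ^ D = (x / (D:ℝ)) ^ (D - j) * (x / (D:ℝ)) ^ j := by
        rw [← pow_add, Nat.sub_add_cancel hj']
      rw [e, mul_assoc, ← mul_pow]
      rw [show x / (D:ℝ) * (D / x) = 1 by field_simp]
      rw [one_pow, mul_one]
      exact one_le_pow₀ ((one_le_div hD).2 hx)
    have hc : (0:ℝ) ≤ n.choose j := by positivity
    nlinarith
  refine (Finset.sum_le_sum h3).trans ?_
  rw [← Finset.mul_sum]
  have h4 : ∑ j ∈ Finset.Iic D, ((D:ℝ) / x) ^ j * n.choose j ≤ (D / x + 1) ^ n := by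
    rw [add_pow]
    simp only [one_pow, mul_one]
    have hsub : (Finset.Iic D).filter (· ≤ n) ⊆ Finset.range (n + 1) := by
      intro j hj
      simp at hj ⊢; omega
    have : ∑ j ∈ Finset.Iic D, ((D:ℝ) / x) ^ j * n.choose j =
        ∑ j ∈ (Finset.Iic D).filter (· ≤ n), ((D:ℝ) / x) ^ j * n.choose j := by
      rw [Finset.sum_filter]
      apply Finset.sum_congr rfl
      intro j _
      split_ifs with hj
      · rfl
      · rw [Nat.choose_eq_zero_of_lt (by omega)]; simp
    rw [this]
    apply Finset.sum_le_sum_of_subset_of_nonneg hsub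
    intros; positivity
  have h5 : ((D:ℝ) / x + 1) ^ n ≤ Real.exp 1 ^ D := by
    calc ((D:ℝ) / x + 1) ^ n ≤ (Real.exp (D / x)) ^ n := by
          gcongr; exact Real.add_one_le_exp _
      _ = Real.exp (n * (D / x)) := by rw [← Real.exp_nat_mul]
      _ ≤ Real.exp (D * 1) := by
          apply Real.exp_le_exp.2
          rw [mul_div_assoc', div_le_iff₀ hx0]
          nlinarith
      _ = _ := by rw [← Real.exp_nat_mul]
  calc (x / D) ^ D * ∑ j ∈ Finset.Iic D, ((D:ℝ) / x) ^ j * n.choose j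
      ≤ (x / D) ^ D * Real.exp 1 ^ D := by
        apply mul_le_mul_of_nonneg_left (h4.trans h5) (by positivity)
    _ = _ := by rw [← mul_pow]; congr 1; ring


lemma sens {α : Type*} [PseudoMetricSpace α] (n k : ℕ) (hk : 1 ≤ k) (hn : 1 ≤ n)
    (x : Fin n → α) : ∃ s : Fin n → ℝ, (∀ i, 0 ≤ s i) ∧ ∑ i, s i ≤ 5 * k ∧
      ∀ C : Fin k → α, ∀ i, (⨅ t, dist (x i) (C t)) ≤ s i * ∑ j, ⨅ t, dist (x j) (C t) := by
  have : Nonempty (Fin k) := ⟨⟨0, hk⟩⟩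
  have : Nonempty (Fin n) := ⟨⟨0, hn⟩⟩
  set f : (Fin k → α) → α → ℝ := fun C a => ⨅ t, dist a (C t) with hf
  have f_le : ∀ C a t, f C a ≤ dist a (C t) := fun C a t =>
    ciInf_le (Set.finite_range _).bddBelow t
  have f_ex : ∀ C a, ∃ t, dist a (C t) = f C a := fun C a => exists_eq_ciInf_of_finite
  have f_nn : ∀ C a, 0 ≤ f C a := fun C a => Real.iInf_nonneg fun t => dist_nonneg
  have f_lip : ∀ C a b, f C a ≤ dist a b + f C b := by
    intro C a b
    obtain ⟨t, ht⟩ := f_ex C b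
    rw [← ht]
    exact (f_le C a t).trans (dist_triangle _ _ _)
  obtain ⟨cs, hcs⟩ := Finite.exists_min (fun c : Fin k → Fin n => ∑ j, f (x ∘ c) (x j))
  set opt := ∑ j, f (x ∘ cs) (x j) with hopt
  have hopt0 : 0 ≤ opt := Finset.sum_nonneg fun _ _ => f_nn _ _
  have happ : ∀ C : Fin k → α, opt ≤ 2 * ∑ j, f C (x j) := by
    intro C
    have : ∀ t, ∃ i, ∀ j, dist (x i) (C t) ≤ dist (x j) (C t) := fun t =>
      Finite.exists_min (fun i => dist (x i) (C t))
    choose near hnear using this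
    refine (hcs near).trans ?_
    rw [Finset.mul_sum]
    apply Finset.sum_le_sum
    intro j _
    obtain ⟨t, ht⟩ := f_ex C (x j)
    have h1 := f_le (x ∘ near) (x j) t
    have h2 := dist_triangle_right (x j) (x (near t)) (C t)
    have h3 := hnear t j
    simp only [Function.comp] at h1
    linarith
  choose a ha using fun i => f_ex (x ∘ cs) (x i)
  set cl : Fin k → Finset (Fin n) := fun t => Finset.univ.filter (fun j => a j = t) with hcl
  have hpos : ∀ i, (0:ℝ) < (cl (a i)).card := by
    intro i
    have : i ∈ cl (a i) := by simp [hcl]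
    exact_mod_cast Finset.card_pos.2 ⟨i, this⟩
  refine ⟨fun i => 2 * f (x ∘ cs) (x i) / opt + 3 / (cl (a i)).card, ?_, ?_, ?_⟩
  · intro i
    have := f_nn (x ∘ cs) (x i)
    have := hpos i
    positivity
  · rw [Finset.sum_add_distrib, ← Finset.sum_div, ← Finset.mul_sum, ← hopt]
    have h1 : 2 * opt / opt ≤ 2 := by
      rcases hopt0.eq_or_lt with h | h
      · rw [← h]; simp
      · rw [div_le_iff₀ h]
    have h2 : ∑ i, (3:ℝ) / (cl (a i)).card ≤ 3 * k := by
      rw [← Finset.sum_fiberwise (s := Finset.univ) (g := a)]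
      have : ∀ t ∈ (Finset.univ : Finset (Fin k)),
          ∑ i ∈ Finset.univ.filter (fun i => a i = t), (3:ℝ) / (cl (a i)).card ≤ 3 := by
        intro t _
        have e : ∑ i ∈ Finset.univ.filter (fun i => a i = t), (3:ℝ) / (cl (a i)).card =
            ∑ i ∈ cl t, (3:ℝ) / (cl t).card := by
          apply Finset.sum_congr rfl
          intro i hi
          rw [(Finset.mem_filter.1 hi).2]
        rw [e, Finset.sum_const, nsmul_eq_mul]
        rcases Nat.eq_zero_or_pos (cl t).card with h | h
        · rw [h]; simp
        · have : (0:ℝ) < (cl t).card := by exact_mod_cast h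
          apply le_of_eq; field_simp
      refine (Finset.sum_le_sum this).trans ?_
      simp [mul_comm]
    have : (1:ℝ) ≤ k := by exact_mod_cast hk
    linarith
  · intro C i
    change f C (x i) ≤ _ * ∑ j, f C (x j)
    set F := ∑ j, f C (x j) with hF
    have hF0 : 0 ≤ F := Finset.sum_nonneg fun _ _ => f_nn _ _
    have hp := hpos i
    set ci := x (cs (a i)) with hci
    have h1 : f C (x i) ≤ f (x ∘ cs) (x i) + f C ci := by
      rw [← ha i]; exact f_lip _ _ _
    have h2 : (cl (a i)).card * f C ci ≤ opt + F := by
      have : ∀ j ∈ cl (a i), f C ci ≤ f (x ∘ cs) (x j) + f C (x j) := by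
        intro j hj
        have hj' : a j = a i := (Finset.mem_filter.1 hj).2
        rw [← ha j, hj']
        have := f_lip C ci (x j)
        rw [dist_comm] at this
        exact this
      have h3 := Finset.sum_le_sum this
      rw [Finset.sum_const, nsmul_eq_mul] at h3
      refine h3.trans ?_
      rw [hopt, hF, ← Finset.sum_add_distrib]
      exact Finset.sum_le_sum_of_subset_of_nonneg (Finset.subset_univ _)
        (fun j _ _ => add_nonneg (f_nn _ _) (f_nn _ _))
    have h3 := happ C
    have h4 : f C ci ≤ 3 / (cl (a i)).card * F := by
      rw [div_mul_eq_mul_div, le_div_iff₀ hp]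
      linarith
    have h5 : f (x ∘ cs) (x i) ≤ 2 * f (x ∘ cs) (x i) / opt * F := by
      have hle : f (x ∘ cs) (x i) ≤ opt :=
        Finset.single_le_sum (f := fun j => f (x ∘ cs) (x j)) (fun j _ => f_nn _ _)
          (Finset.mem_univ i)
      rcases hopt0.eq_or_lt with h | h
      · rw [← h] at hle ⊢
        simpa using hle
      · rw [div_mul_eq_mul_div, le_div_iff₀ h]
        nlinarith [f_nn (x ∘ cs) (x i)]
    rw [add_mul]
    linarith

lemma hausdorff_le_iff {d : ℕ} (A B : Finset (Pt d)) (hA : A.Nonempty) (hB : B.Nonempty)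
    (ρ : ℝ) (hρ : 0 ≤ ρ) :
    Metric.hausdorffDist (A : Set (Pt d)) (B : Set (Pt d)) ≤ ρ ↔
      (∀ q ∈ A, ∃ c ∈ B, dist q c ≤ ρ) ∧ (∀ c ∈ B, ∃ q ∈ A, dist q c ≤ ρ) := by
  have key : ∀ A B : Finset (Pt d), A.Nonempty → B.Nonempty →
      Metric.hausdorffDist (A : Set (Pt d)) (B : Set (Pt d)) ≤ ρ →
      ∀ q ∈ A, ∃ c ∈ B, dist q c ≤ ρ := by
    intro A B hA hB h q hq
    have hfin := Metric.hausdorffEDist_ne_top_of_nonempty_of_bounded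
      (Finset.coe_nonempty.2 hA) (Finset.coe_nonempty.2 hB)
      A.finite_toSet.isBounded B.finite_toSet.isBounded
    have h1 := Metric.infDist_le_hausdorffDist_of_mem (Finset.mem_coe.2 hq) hfin
    obtain ⟨c, hc, hc'⟩ := B.finite_toSet.isCompact.exists_infDist_eq_dist
      (Finset.coe_nonempty.2 hB) q
    exact ⟨c, hc, by rw [← hc']; linarith⟩
  constructor
  · intro h
    refine ⟨key A B hA hB h, ?_⟩
    intro c hc
    obtain ⟨q, hq, h'⟩ := key B A hB hA (by rw [Metric.hausdorffDist_comm]; exact h) c hc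
    exact ⟨q, hq, by rw [dist_comm]; exact h'⟩
  · rintro ⟨h1, h2⟩
    apply Metric.hausdorffDist_le_of_mem_dist hρ
    · intro q hq; exact h1 q hq
    · intro c hc
      obtain ⟨q, hq, h⟩ := h2 c hc
      exact ⟨q, hq, by rw [dist_comm]; exact h⟩

lemma exists_enum {d l : ℕ} (C : Finset (Pt d)) (h : C.Nonempty) (hc : C.card ≤ l) :
    ∃ e : Fin l → Pt d, ∀ c, c ∈ C ↔ ∃ j, e j = c := by
  have : Nonempty C := h.to_subtype
  obtain ⟨emb⟩ : Nonempty (C ↪ Fin l) :=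
    Function.Embedding.nonempty_of_card_le (by simpa using hc)
  have hs := Function.invFun_surjective emb.injective
  refine ⟨fun j => (Function.invFun emb j : C), fun c => ⟨fun hc => ?_, ?_⟩⟩
  · obtain ⟨j, hj⟩ := hs ⟨c, hc⟩
    exact ⟨j, congrArg Subtype.val hj⟩
  · rintro ⟨j, rfl⟩
    exact (Function.invFun emb j).2

/-- feature map -/
def feat {d n : ℕ} (τ : Fin n → ℝ) (z : (_ : Fin n) × Pt d) : Fin d ⊕ Fin 3 → ℝ :=
  Sum.elim (fun a => z.2 a) ![‖z.2‖ ^ 2, 1, τ z.1 ^ 2]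

lemma feat_spec {d n : ℕ} (τ : Fin n → ℝ) (hτ : ∀ i, 0 ≤ τ i) (c : Pt d) (r : ℝ) (hr : 0 ≤ r) :
    ∃ w : Fin d ⊕ Fin 3 → ℝ, ∀ z : (_ : Fin n) × Pt d,
      dist z.2 c ≤ r * τ z.1 ↔ ∑ j, w j * feat τ z j ≤ 0 := by
  refine ⟨Sum.elim (fun a => -2 * c a) ![1, ‖c‖ ^ 2, -r ^ 2], fun z => ?_⟩
  have h0 : 0 ≤ r * τ z.1 := mul_nonneg hr (hτ _)
  rw [← sq_le_sq₀ dist_nonneg h0, dist_eq_norm, @norm_sub_sq_real]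
  have : inner ℝ z.2 c = ∑ a, c a * z.2 a := by
    rw [PiLp.inner_apply]; simp
  simp only [Fintype.sum_sum_type, feat, Sum.elim_inl, Sum.elim_inr, Fin.sum_univ_three, this,
    Matrix.cons_val_zero, Matrix.cons_val_one, Matrix.cons_val]
  have e : ∑ a, -2 * c a * z.2 a = -2 * ∑ a, c a * z.2 a := by
    rw [Finset.mul_sum]; apply Finset.sum_congr rfl; intros; ring
  rw [e]
  constructor <;> intro h <;> nlinarith

/-- parameters of the range space -/
abbrev Par (d k l : ℕ) := {p : (Fin k → Finset (Pt d)) × ℝ //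
  (∀ t, (p.1 t).Nonempty ∧ (p.1 t).card ≤ l) ∧ 0 ≤ p.2}

lemma growth {d k l m n : ℕ} (hk : 1 ≤ k) (Q : Fin n → Finset (Pt d))
    (hQ : ∀ i, (Q i).Nonempty ∧ (Q i).card ≤ m) (τ : Fin n → ℝ) (hτ : ∀ i, 0 ≤ τ i)
    (Y : Finset ((_ : Fin n) × ℕ)) (hY : ((d + 3 : ℕ) : ℝ) ≤ Y.card * m) :
    ∃ S : Finset (Finset ((_ : Fin n) × ℕ)),
      (S.card : ℝ) ≤ ((Real.exp 1 * (Y.card * m) / (d + 3 : ℕ)) ^ (d + 3)) ^ (k * l) ∧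
      ∀ p : Par d k l, Y.filter (fun x => p.1.2 * τ x.1 < ⨅ t : Fin k,
        Metric.hausdorffDist (Q x.1 : Set (Pt d)) (p.1.1 t : Set (Pt d))) ∈ S := by
  have : Nonempty (Fin k) := ⟨⟨0, hk⟩⟩
  set Z : Finset ((_ : Fin n) × Pt d) := (Y.image Sigma.fst).sigma Q with hZ
  have hZc : Z.card ≤ Y.card * m := by
    rw [hZ, Finset.card_sigma]
    refine (Finset.sum_le_card_nsmul _ _ m (fun i _ => (hQ i).2)).trans ?_
    rw [smul_eq_mul]
    exact Nat.mul_le_mul_right _ Finset.card_image_le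
  set H : Finset (Finset Z) := hs (fun z : Z => feat τ z.1) with hH
  have hHc := hs_card (fun z : Z => feat τ z.1) (Y.card * m : ℝ) (by simp)
    (by simpa using hY) (by rw [Fintype.card_coe]; exact_mod_cast hZc)
  have hJ : Fintype.card (Fin d ⊕ Fin 3) = d + 3 := by simp
  rw [hJ] at hHc
  set dec : (Fin k × Fin l → Finset Z) → Finset ((_ : Fin n) × ℕ) := fun h =>
    Y.filter (fun x => ∀ t : Fin k, ¬ ((∀ q ∈ Q x.1, ∃ j, ∃ hz : ⟨x.1, q⟩ ∈ Z, ⟨_, hz⟩ ∈ h (t, j)) ∧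
      ∀ j, ∃ q ∈ Q x.1, ∃ hz : ⟨x.1, q⟩ ∈ Z, ⟨_, hz⟩ ∈ h (t, j))) with hdec
  refine ⟨(Fintype.piFinset (fun _ : Fin k × Fin l => H)).image dec, ?_, ?_⟩
  · have h1 : ((Fintype.piFinset (fun _ : Fin k × Fin l => H)).image dec).card ≤
        H.card ^ (k * l) := by
      refine Finset.card_image_le.trans ?_
      simp
    calc _ ≤ ((H.card ^ (k * l) : ℕ) : ℝ) := by exact_mod_cast h1
      _ = (H.card : ℝ) ^ (k * l) := by push_cast; rfl
      _ ≤ _ := by gcongr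
  · rintro ⟨⟨C, r⟩, hC, hr⟩
    dsimp only at hC hr ⊢
    choose e he using fun t => exists_enum (C t) (hC t).1 (hC t).2
    rw [Finset.mem_image]
    refine ⟨fun tj => Finset.univ.filter (fun z : Z => dist z.1.2 (e tj.1 tj.2) ≤ r * τ z.1.1), ?_, ?_⟩
    · rw [Fintype.mem_piFinset]
      rintro ⟨t, j⟩
      rw [hH, hs, Finset.mem_filter]
      refine ⟨Finset.mem_univ _, ?_⟩
      obtain ⟨w, hw⟩ := feat_spec τ hτ (e t j) r hr
      refine ⟨w, fun z => ?_⟩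
      rw [← hw]
      simp
    · rw [hdec]
      apply Finset.filter_congr
      intro x hx
      have hmem : ∀ q ∈ Q x.1, (⟨x.1, q⟩ : (_ : Fin n) × Pt d) ∈ Z := by
        intro q hq
        rw [hZ, Finset.mem_sigma]
        exact ⟨Finset.mem_image_of_mem _ hx, hq⟩
      have h1 : (r * τ x.1 < ⨅ t : Fin k,
          Metric.hausdorffDist (Q x.1 : Set (Pt d)) (C t : Set (Pt d))) ↔
          ∀ t, r * τ x.1 < Metric.hausdorffDist (Q x.1 : Set (Pt d)) (C t : Set (Pt d)) := by
        constructor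
        · intro h t
          exact lt_of_lt_of_le h (ciInf_le (Set.finite_range _).bddBelow t)
        · intro h
          obtain ⟨t, ht⟩ := exists_eq_ciInf_of_finite (f := fun t : Fin k =>
            Metric.hausdorffDist (Q x.1 : Set (Pt d)) (C t : Set (Pt d)))
          rw [← ht]; exact h t
      rw [h1]
      apply forall_congr'
      intro t
      rw [← not_le, not_iff_not, hausdorff_le_iff _ _ (hQ x.1).1 (hC t).1 _
        (mul_nonneg hr (hτ _))]
      simp only [Finset.mem_filter, Finset.mem_univ, true_and]
      constructor
      · rintro ⟨ha, hb⟩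
        refine ⟨fun q hq => ?_, fun c hc => ?_⟩
        · obtain ⟨j, _, hj⟩ := ha q hq
          exact ⟨e t j, (he t _).2 ⟨j, rfl⟩, hj⟩
        · obtain ⟨j, rfl⟩ := (he t c).1 hc
          obtain ⟨q, hq, _, h⟩ := hb j
          exact ⟨q, hq, h⟩
      · rintro ⟨ha, hb⟩
        refine ⟨fun q hq => ?_, fun j => ?_⟩
        · obtain ⟨c, hc, h⟩ := ha q hq
          obtain ⟨j, rfl⟩ := (he t c).1 hc
          exact ⟨j, hmem q hq, h⟩
        · obtain ⟨q, hq, h⟩ := hb (e t j) ((he t _).2 ⟨j, rfl⟩)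
          exact ⟨q, hq, hmem q hq, h⟩

/-- multiplicities -/
lemma exists_mult (n k T : ℕ) (hn : 1 ≤ n) (hk : 1 ≤ k) (hT : 4 * n ≤ T) (s : Fin n → ℝ)
    (hs0 : ∀ i, 0 ≤ s i) (hs : ∑ i, s i ≤ 5 * k) :
    ∃ t : Fin n → ℕ, ∑ i, t i = T ∧ (∀ i, 0 < t i) ∧ ∀ i, (T : ℝ) / (10 * k) * s i ≤ t i := by
  set M : ℝ := (T : ℝ) / (10 * k) with hM
  have hk' : (1:ℝ) ≤ k := by exact_mod_cast hk
  have hM0 : 0 ≤ M := by positivity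
  set u : Fin n → ℕ := fun i => ⌈M * s i⌉₊ + 1 with hu
  have hsum : ∑ i, u i ≤ T := by
    have : ∑ i, (u i : ℝ) ≤ ∑ i, (M * s i + 2) := by
      apply Finset.sum_le_sum
      intro i _
      have := (Nat.ceil_lt_add_one (mul_nonneg hM0 (hs0 i))).le
      simp only [hu]; push_cast
      linarith
    have h2 : ∑ i, (M * s i + 2) ≤ (T:ℝ) := by
      rw [Finset.sum_add_distrib, ← Finset.mul_sum]
      have h3 : M * ∑ i, s i ≤ M * (5 * k) := mul_le_mul_of_nonneg_left hs hM0
      have h4 : M * (5 * k) = T / 2 := by rw [hM]; field_simp; ring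
      have h5 : (4 * n : ℝ) ≤ T := by exact_mod_cast hT
      simp
      linarith
    exact_mod_cast this.trans h2
  set i0 : Fin n := ⟨0, hn⟩
  refine ⟨fun i => u i + if i = i0 then T - ∑ i, u i else 0, ?_, ?_, ?_⟩
  · rw [Finset.sum_add_distrib]
    simp
    omega
  · intro i; simp [hu]
  · intro i
    have := Nat.le_ceil (M * s i)
    simp only [hu]
    push_cast
    have h2 : (0:ℝ) ≤ if i = i0 then ((T - ∑ i, (⌈M * s i⌉₊ + 1) : ℕ) : ℝ) else 0 := by
      split_ifs <;> positivity
    linarith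


set_option maxHeartbeats 2000000 in
lemma core {d k l m n : ℕ} (hk : 1 ≤ k) (hl : 1 ≤ l) (hm : 1 ≤ m) (hn : 1 ≤ n)
    (Q : Fin n → Finset (Pt d)) (hQ : ∀ i, (Q i).Nonempty ∧ (Q i).card ≤ m)
    (ε : ℝ) (hε : 0 < ε) (N : ℕ) (hND : d + 3 ≤ N)
    (hN : 14400 * (k : ℝ) ^ 2 * (k * l * (d + 3 : ℕ) *
      (Real.log (Real.exp 1 * (N * m) / (d + 3 : ℕ)) + 1)) ≤ ε ^ 2 * N) :
    ∃ (idx : Fin N → Fin n) (ω : Fin N → ℝ), (∀ j, 0 < ω j) ∧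
      ∀ C' : Fin k → Finset (Pt d), (∀ i, (C' i).Nonempty ∧ (C' i).card ≤ l) →
        |(∑ j, ω j * ⨅ i : Fin k,
            Metric.hausdorffDist (↑(Q (idx j)) : Set (Pt d)) (↑(C' i) : Set (Pt d))) -
          (1 / (n : ℝ)) * ∑ i, ⨅ t : Fin k,
            Metric.hausdorffDist (↑(Q i) : Set (Pt d)) (↑(C' t) : Set (Pt d))| ≤
          ε * ((1 / (n : ℝ)) * ∑ i, ⨅ t : Fin k,
            Metric.hausdorffDist (↑(Q i) : Set (Pt d)) (↑(C' t) : Set (Pt d))) := by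
  set D : ℕ := d + 3 with hD
  have hD0 : (0:ℝ) < D := by positivity
  have hN0 : 0 < N := by omega
  have hN' : (0:ℝ) < N := by exact_mod_cast hN0
  have hk' : (1:ℝ) ≤ k := by exact_mod_cast hk
  have hl' : (1:ℝ) ≤ l := by exact_mod_cast hl
  have hm' : (1:ℝ) ≤ m := by exact_mod_cast hm
  have hn' : (1:ℝ) ≤ n := by exact_mod_cast hn
  have hND' : (D:ℝ) ≤ N := by exact_mod_cast hND
  set a : ℝ := Real.log (Real.exp 1 * (N * m) / D) with ha
  have hbase : 1 ≤ Real.exp 1 * (N * m) / D := by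
    rw [one_le_div hD0]
    have h1 : (1:ℝ) ≤ Real.exp 1 := Real.one_le_exp (by norm_num)
    have h2 : (N:ℝ) ≤ N * m := by nlinarith
    nlinarith
  have ha0 : 0 ≤ a := Real.log_nonneg hbase
  have hea : Real.exp a = Real.exp 1 * (N * m) / D := Real.exp_log (by linarith)
  have hkl1 : (1:ℝ) ≤ (k:ℝ) * l := by nlinarith
  have hD1 : (1:ℝ) ≤ D := by rw [hD]; push_cast; linarith [Nat.cast_nonneg (α := ℝ) d]
  set E : ℝ := k * l * D with hE
  have hE1 : 1 ≤ E := by rw [hE]; nlinarith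
  set B : ℝ := E * (a + 1) with hB
  have hB0 : 0 < B := by positivity
  -- choose the number of halvings
  set L : ℕ := 4 * n with hL
  set T : ℕ := N * 2 ^ L with hT
  have hTn : 4 * n ≤ T := by
    have : L ≤ 2 ^ L := Nat.lt_two_pow_self.le
    calc 4 * n ≤ 2 ^ L := this
      _ ≤ N * 2 ^ L := Nat.le_mul_of_pos_left _ hN0
  have hT0 : (0:ℝ) < T := by
    have : 0 < T := by omega
    exact_mod_cast this
  -- sensitivities
  let toNC : (A : Finset (Pt d)) → A.Nonempty → TopologicalSpace.NonemptyCompacts (Pt d) :=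
    fun A hA => ⟨⟨A, A.finite_toSet.isCompact⟩, Finset.coe_nonempty.2 hA⟩
  have hdist : ∀ A B hA hB, dist (toNC A hA) (toNC B hB) =
      Metric.hausdorffDist (A : Set (Pt d)) (B : Set (Pt d)) := fun A B hA hB => rfl
  obtain ⟨s, hs0, hs1, hs2⟩ := sens n k hk hn (fun i => toNC (Q i) (hQ i).1)
  obtain ⟨t, ht1, ht2, ht3⟩ := exists_mult n k T hn hk hTn s hs0 hs1
  have ht2' : ∀ i, (0:ℝ) < t i := fun i => by exact_mod_cast ht2 i
  set X : Finset ((_ : Fin n) × ℕ) := Finset.univ.sigma (fun i => Finset.range (t i)) with hX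
  have hXc : X.card = N * 2 ^ L := by
    rw [hX, Finset.card_sigma]; simpa using ht1
  obtain ⟨Y, hYX, hYc, hY⟩ := iterate_halving (P := Par d k l)
    (fun p x => p.1.2 * (t x.1 : ℝ) < ⨅ t : Fin k,
        Metric.hausdorffDist (Q x.1 : Set (Pt d)) (p.1.1 t : Set (Pt d))) N hN0 B hB0 (by
      intro j Y hYc
      have h2j : (1:ℝ) ≤ 2 ^ j := one_le_pow₀ (by norm_num)
      have hYc' : (Y.card : ℝ) = N * 2 ^ j := by rw [hYc]; push_cast; ring
      have hle : (N:ℝ) ≤ Y.card * m := by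
        rw [hYc']
        have : (1:ℝ) ≤ 2 ^ j * m := by nlinarith
        nlinarith
      obtain ⟨S, hS, hS2⟩ := growth (l := l) hk Q hQ (fun i => (t i : ℝ)) (fun i => (ht2' i).le) Y
        (hND'.trans hle)
      refine ⟨S, ?_, hS2⟩
      have e1 : Real.exp 1 * (Y.card * m) / (d + 3 : ℕ) = Real.exp (a + j * Real.log 2) := by
        rw [Real.exp_add, hea, Real.exp_nat_mul, Real.exp_log (by norm_num), hYc']
        ring
      rw [e1, ← pow_mul, ← Real.exp_nat_mul] at hS
      have hlog : Real.log 2 ≤ 1 := by linarith [Real.log_two_lt_d9]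
      have hlog0 : 0 < Real.log 2 := Real.log_pos (by norm_num)
      calc 2 * (S.card : ℝ) ≤ 2 * Real.exp (((d + 3) * (k * l) : ℕ) * (a + j * Real.log 2)) := by
            linarith
        _ = Real.exp (Real.log 2 + E * (a + j * Real.log 2)) := by
            rw [Real.exp_add, Real.exp_log (by norm_num)]
            congr 3
            rw [hE, hD]; push_cast; ring
        _ ≤ Real.exp (B * (1 + j)) := by
            apply Real.exp_le_exp.2
            rw [hB]
            have hj : (0:ℝ) ≤ j := by positivity
            have h1 : E * (a + j * Real.log 2) ≤ E * (a + j) := by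
              apply mul_le_mul_of_nonneg_left _ (by linarith)
              nlinarith
            have h2 : 0 ≤ E * (a * j) := by positivity
            nlinarith) L X hXc
  have hη : 10 * k * (12 * Real.sqrt (B / N)) ≤ ε := by
    have h1 : Real.sqrt (B / N) ≤ ε / (120 * k) := by
      apply Real.sqrt_le_iff.2
      refine ⟨by positivity, ?_⟩
      rw [div_pow, div_le_div_iff₀ hN' (by positivity)]
      calc B * (120 * (k:ℝ)) ^ 2 = 14400 * (k : ℝ) ^ 2 * B := by ring
        _ ≤ ε ^ 2 * N := hN
    rw [le_div_iff₀ (by positivity)] at h1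
    linarith
  set η : ℝ := 12 * Real.sqrt (B / N) with hηdef
  let e : Fin N ≃ Y := (Y.equivFinOfCardEq hYc).symm
  refine ⟨fun j => (e j).1.1, fun j => T / (N * n * t (e j).1.1), ?_, ?_⟩
  · intro j
    have := ht2' (e j).1.1
    positivity
  intro C hC
  set f : Fin n → ℝ := fun i => ⨅ t : Fin k,
    Metric.hausdorffDist (Q i : Set (Pt d)) (C t : Set (Pt d)) with hf
  have hf0 : ∀ i, 0 ≤ f i := fun i => Real.iInf_nonneg fun t => Metric.hausdorffDist_nonneg
  set F := ∑ i, f i with hF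
  have hF0 : 0 ≤ F := Finset.sum_nonneg fun i _ => hf0 i
  have hsen : ∀ i, f i ≤ s i * F := fun i => hs2 (fun t => toNC (C t) (hC t).1) i
  set g : ((_ : Fin n) × ℕ) → ℝ := fun x => f x.1 / t x.1 with hg
  set w : ((_ : Fin n) × ℕ) → ℝ := fun x => (if x ∈ Y then 1 / (N:ℝ) else 0) - 1 / T with hw
  have hgB : ∀ x ∈ X, 0 ≤ g x ∧ g x ≤ F * (10 * k) / T := by
    intro x _
    have h1 := ht2' x.1
    refine ⟨div_nonneg (hf0 _) h1.le, ?_⟩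
    rw [hg]
    dsimp only
    rw [div_le_div_iff₀ h1 hT0]
    have h2 := ht3 x.1
    rw [div_mul_eq_mul_div, div_le_iff₀ (by positivity)] at h2
    have h3 := hsen x.1
    calc f x.1 * T ≤ s x.1 * F * T := by gcongr
      _ = F * (T * s x.1) := by ring
      _ ≤ F * (t x.1 * (10 * k)) := by gcongr
      _ = _ := by ring
  have hsumY : ∀ h : ((_ : Fin n) × ℕ) → ℝ, ∑ x ∈ X, (if x ∈ Y then h x else 0) = ∑ x ∈ Y, h x := by
    intro h
    rw [← Finset.sum_filter]
    apply Finset.sum_congr _ (fun _ _ => rfl)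
    ext x
    simp only [Finset.mem_filter]
    exact ⟨fun h => h.2, fun h => ⟨hYX h, h⟩⟩
  have hlc := layer_cake X w g (F * (10 * k) / T) η hgB (by positivity) (by
    intro r hr
    have h1 := hY ⟨(C, r), hC, hr⟩
    dsimp only at h1
    have hiff : ∀ x : ((_ : Fin n) × ℕ), r < g x ↔ r * (t x.1 : ℝ) < f x.1 := fun x =>
      lt_div_iff₀ (ht2' x.1)
    have h2 : (∑ x ∈ X, if r < g x then w x else 0) =
        ((Y.filter (fun x => r * (t x.1 : ℝ) < f x.1)).card : ℝ) / N -
        ((X.filter (fun x => r * (t x.1 : ℝ) < f x.1)).card : ℝ) / (N * 2 ^ L) := by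
      have e2 : ∀ x ∈ X, (if r < g x then w x else 0) =
          (if x ∈ Y then (if r * (t x.1 : ℝ) < f x.1 then 1 else 0) / (N:ℝ) else 0) -
          (if r * (t x.1 : ℝ) < f x.1 then 1 else 0) / (T:ℝ) := by
        intro x _
        rw [hw]
        simp only [hiff x]
        split_ifs <;> simp
      rw [Finset.sum_congr rfl e2, Finset.sum_sub_distrib, hsumY, ← Finset.sum_div,
        ← Finset.sum_div, Finset.card_filter, Finset.card_filter, hT]
      push_cast
      rfl
    rw [h2]
    refine h1.trans ?_
    rw [hηdef]
    apply mul_le_mul_of_nonneg_right _ (Real.sqrt_nonneg _)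
    have : (0:ℝ) ≤ (3 / 4) ^ L := by positivity
    linarith)
  have hwg : ∑ x ∈ X, w x * g x = (∑ x ∈ Y, g x) / N - F / T := by
    have e2 : ∀ x ∈ X, w x * g x = (if x ∈ Y then g x / (N:ℝ) else 0) - g x / T := by
      intro x _
      rw [hw]
      dsimp only
      split_ifs <;> ring
    rw [Finset.sum_congr rfl e2, Finset.sum_sub_distrib, hsumY, ← Finset.sum_div, ← Finset.sum_div]
    congr 2
    rw [hX, Finset.sum_sigma, hF]
    apply Finset.sum_congr rfl
    intro i _
    have := ht2' i
    simp only [hg, Finset.sum_const, Finset.card_range, nsmul_eq_mul]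
    field_simp
  rw [hwg] at hlc
  have hfin : (∑ j, (T:ℝ) / (N * n * t (e j).1.1) * f (e j).1.1) = (T:ℝ) / n * ((∑ x ∈ Y, g x) / N) := by
    rw [← Finset.sum_coe_sort Y g, ← e.sum_comp, Finset.sum_div, Finset.mul_sum]
    apply Finset.sum_congr rfl
    intro j _
    have := ht2' (e j).1.1
    simp only [hg]
    field_simp
  change |(∑ j, (T:ℝ) / (N * n * t (e j).1.1) * f (e j).1.1) - 1 / (n:ℝ) * F| ≤ ε * (1 / (n:ℝ) * F)
  rw [hfin]
  have e3 : (T:ℝ) / n * ((∑ x ∈ Y, g x) / N) - 1 / (n:ℝ) * F =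
      (T:ℝ) / n * ((∑ x ∈ Y, g x) / N - F / T) := by
    field_simp
  rw [e3, abs_mul, abs_of_pos (by positivity : (0:ℝ) < (T:ℝ) / n)]
  calc (T:ℝ) / n * |(∑ x ∈ Y, g x) / N - F / T| ≤ (T:ℝ) / n * (η * (F * (10 * k) / T)) := by gcongr
    _ = (10 * k * η) * (1 / n * F) := by field_simp
    _ ≤ ε * (1 / n * F) := by
      apply mul_le_mul_of_nonneg_right hη (by positivity)

lemma numeric (δ : ℝ) (hδ : 0 < δ) : ∃ c0 : ℝ, 1 ≤ c0 ∧ ∀ d k l m : ℕ, 1 ≤ k → 1 ≤ l → 1 ≤ m →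
    ∀ ε : ℝ, 0 < ε → ε < 1 → ∃ N : ℕ, d + 3 ≤ N ∧
      (N : ℝ) ≤ 2 * c0 * ((k : ℝ) ^ 3 * l * (m : ℝ) ^ δ * (d + 3 : ℕ) / ε ^ 2) *
          (1 + Real.log ((k : ℝ) * l / ε)) ∧
      14400 * (k : ℝ) ^ 2 * (k * l * (d + 3 : ℕ) *
      (Real.log (Real.exp 1 * (N * m) / (d + 3 : ℕ)) + 1)) ≤ ε ^ 2 * N := by
  refine ⟨28800 * (57606 + 1 / δ), ?_, ?_⟩
  · have : 0 < 1 / δ := by positivity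
    linarith
  set c0 : ℝ := 28800 * (57606 + 1 / δ) with hc0
  have hδ' : 0 < 1 / δ := by positivity
  have hc1 : 1 ≤ c0 := by linarith
  intro d k l m hk hl hm ε hε hε1
  have hk' : (1:ℝ) ≤ k := by exact_mod_cast hk
  have hl' : (1:ℝ) ≤ l := by exact_mod_cast hl
  have hm' : (1:ℝ) ≤ m := by exact_mod_cast hm
  set D : ℕ := d + 3 with hD
  have hD1 : (1:ℝ) ≤ D := by rw [hD]; push_cast; linarith [Nat.cast_nonneg (α := ℝ) d]
  have hkl1 : (1:ℝ) ≤ (k:ℝ) * l := by nlinarith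
  set y : ℝ := (k:ℝ) * l / ε with hy
  have hy1 : 1 ≤ y := by rw [hy, one_le_div hε]; linarith
  set lg := Real.log y with hlg
  have hlg0 : 0 ≤ lg := Real.log_nonneg hy1
  set μ : ℝ := (m:ℝ) ^ δ with hμ
  have hμ1 : 1 ≤ μ := Real.one_le_rpow hm' hδ.le
  set Λ : ℝ := μ * (1 + lg) with hΛ
  have hΛ1 : 1 + lg ≤ Λ := by rw [hΛ]; nlinarith
  have hΛμ : μ ≤ Λ := by rw [hΛ]; nlinarith
  set κ : ℝ := (k:ℝ) ^ 3 * l / ε ^ 2 with hκ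
  have hκ1 : 1 ≤ κ := by
    rw [hκ, one_le_div (by positivity)]
    have h1 : (1:ℝ) ≤ (k:ℝ) ^ 3 := one_le_pow₀ hk'
    nlinarith
  have hκy : κ ≤ y ^ 3 := by
    rw [hκ, hy, div_pow, div_le_div_iff₀ (by positivity) (by positivity)]
    have h1 : (l:ℝ) ≤ (l:ℝ) ^ 3 := le_self_pow₀ hl' (by norm_num)
    have h2 : ε ^ 3 ≤ ε ^ 2 := pow_le_pow_of_le_one hε.le hε1.le (by norm_num)
    calc (k:ℝ) ^ 3 * l * ε ^ 3 ≤ (k:ℝ) ^ 3 * l ^ 3 * ε ^ 2 := by gcongr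
      _ = _ := by ring
  have hκΛ : 1 ≤ κ * Λ := by nlinarith
  have hA1 : (D:ℝ) ≤ c0 * κ * Λ * D := by
    have : 1 ≤ c0 * (κ * Λ) := by nlinarith
    nlinarith
  set N : ℕ := ⌈c0 * κ * Λ * D⌉₊ with hNdef
  have hN1 : c0 * κ * Λ * D ≤ N := Nat.le_ceil _
  have hN2 : (N:ℝ) ≤ 2 * (c0 * κ * Λ * D) := by
    have := (Nat.ceil_lt_add_one (by positivity : 0 ≤ c0 * κ * Λ * D)).le
    linarith
  refine ⟨N, ?_, ?_, ?_⟩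
  · have : (D:ℝ) ≤ N := hA1.trans hN1
    exact_mod_cast this
  · refine hN2.trans (le_of_eq ?_)
    rw [hκ, hΛ]; ring
  · have hlog : Real.log (Real.exp 1 * (N * m) / D) ≤
        1 + Real.log (2 * c0) + 3 * lg + Real.log Λ + Real.log m := by
      have hN0 : (0:ℝ) < N := by linarith
      calc Real.log (Real.exp 1 * (N * m) / D) ≤
          Real.log (Real.exp 1 * (2 * c0) * y ^ 3 * Λ * m) := by
            apply Real.log_le_log (by positivity)
            rw [div_le_iff₀ (by positivity)]
            calc Real.exp 1 * (N * m) ≤ Real.exp 1 * ((2 * (c0 * κ * Λ * D)) * m) := by gcongr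
              _ ≤ Real.exp 1 * ((2 * (c0 * y ^ 3 * Λ * D)) * m) := by gcongr
              _ = _ := by ring
        _ = _ := by
            rw [Real.log_mul (by positivity) (by positivity),
              Real.log_mul (by positivity) (by positivity),
              Real.log_mul (by positivity) (by positivity),
              Real.log_mul (by positivity) (by positivity), Real.log_exp, Real.log_pow]
            push_cast; ring
    have h1 : Real.log Λ ≤ Λ := (Real.log_le_sub_one_of_pos (by linarith)).trans (by linarith)
    have h2 : Real.log m ≤ 1 / δ * Λ := by
      have := Real.log_le_rpow_div (x := (m:ℝ)) (by linarith) hδ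
      calc Real.log m ≤ μ / δ := this
        _ = 1 / δ * μ := by ring
        _ ≤ _ := by gcongr
    have h3 : Real.log (2 * c0) ≤ 57600 + c0 / 28800 := by
      have e1 : 2 * c0 = 57600 * (c0 / 28800) := by ring
      rw [e1, Real.log_mul (by norm_num) (by positivity)]
      have := Real.log_le_sub_one_of_pos (show (0:ℝ) < 57600 by norm_num)
      have := Real.log_le_sub_one_of_pos (show (0:ℝ) < c0 / 28800 by positivity)
      linarith
    have h4 : 14400 * (Real.log (Real.exp 1 * (N * m) / D) + 1) ≤ c0 * Λ := by
      have h5 : 14400 * (57606 + c0 / 28800 + 1 / δ) ≤ c0 := by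
        rw [hc0]; linarith
      have h6 : Real.log (Real.exp 1 * (N * m) / D) + 1 ≤
          (57606 + c0 / 28800 + 1 / δ) * Λ := by
        have h7 : (57602 + c0 / 28800) ≤ (57602 + c0 / 28800) * Λ :=
          le_mul_of_one_le_right (by positivity) (by linarith)
        have h8 : 3 * lg ≤ 3 * Λ := by linarith
        linarith
      nlinarith
    calc 14400 * (k : ℝ) ^ 2 * (k * l * D * (Real.log (Real.exp 1 * (N * m) / D) + 1))
        = (k:ℝ) ^ 3 * l * D * (14400 * (Real.log (Real.exp 1 * (N * m) / D) + 1)) := by ring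
      _ ≤ (k:ℝ) ^ 3 * l * D * (c0 * Λ) := by gcongr
      _ = ε ^ 2 * (c0 * κ * Λ * D) := by rw [hκ]; field_simp
      _ ≤ ε ^ 2 * N := by gcongr

end HC

/-- coresets of size `c·(k³·l·m^δ·d/ε²)·(1 + log(k·l/ε))` for
`(k, U^l)`-median clustering of point sets under the Hausdorff distance. -/
theorem hausdorff_coreset_exists (δ : ℝ) (hδ : 0 < δ) :
    ∃ c : ℝ, 0 < c ∧
      ∀ d k l m : ℕ, 1 ≤ d → 1 ≤ k → 1 ≤ l → 1 ≤ m → l ≤ m →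
      ∀ ε : ℝ, ε ∈ Set.Ioo (0 : ℝ) 1 →
      ∀ n : ℕ, 1 ≤ n → ∀ Q : Fin n → Finset (Pt d),
      (∀ i, (Q i).Nonempty ∧ (Q i).card ≤ m) →
      ∃ (N : ℕ) (idx : Fin N → Fin n) (ω : Fin N → ℝ),
        (N : ℝ) ≤ c * ((k : ℝ) ^ 3 * l * (m : ℝ) ^ δ * d / ε ^ 2) *
          (1 + Real.log ((k : ℝ) * l / ε)) ∧
        (∀ j, 0 < ω j) ∧
        ∀ C' : Fin k → Finset (Pt d), (∀ i, (C' i).Nonempty ∧ (C' i).card ≤ l) →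
          (∑ j, ω j * ⨅ i : Fin k,
              Metric.hausdorffDist (↑(Q (idx j)) : Set (Pt d)) (↑(C' i) : Set (Pt d))) ∈
            Set.Icc
              ((1 - ε) * ((1 / (n : ℝ)) * ∑ i, ⨅ t : Fin k,
                Metric.hausdorffDist (↑(Q i) : Set (Pt d)) (↑(C' t) : Set (Pt d))))
              ((1 + ε) * ((1 / (n : ℝ)) * ∑ i, ⨅ t : Fin k,
                Metric.hausdorffDist (↑(Q i) : Set (Pt d)) (↑(C' t) : Set (Pt d)))) := by
  obtain ⟨c0, hc0, hnum⟩ := HC.numeric δ hδ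
  refine ⟨8 * c0, by linarith, ?_⟩
  intro d k l m hd hk hl hm _ ε hε n hn Q hQ
  obtain ⟨N, hND, hNle, hN⟩ := hnum d k l m hk hl hm ε hε.1 hε.2
  obtain ⟨idx, ω, hω, h⟩ := HC.core hk hl hm hn Q hQ ε hε.1 N hND hN
  refine ⟨N, idx, ω, ?_, hω, ?_⟩
  · refine hNle.trans ?_
    have hk' : (1:ℝ) ≤ k := by exact_mod_cast hk
    have hl' : (1:ℝ) ≤ l := by exact_mod_cast hl
    have hd' : (1:ℝ) ≤ d := by exact_mod_cast hd
    have hε0 := hε.1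
    have hlog : 0 ≤ Real.log ((k:ℝ) * l / ε) := by
      apply Real.log_nonneg
      rw [one_le_div hε0]
      have := hε.2
      nlinarith
    have hD : ((d + 3 : ℕ) : ℝ) ≤ 4 * d := by push_cast; linarith
    calc 2 * c0 * ((k : ℝ) ^ 3 * l * (m : ℝ) ^ δ * (d + 3 : ℕ) / ε ^ 2) *
          (1 + Real.log ((k : ℝ) * l / ε))
        ≤ 2 * c0 * ((k : ℝ) ^ 3 * l * (m : ℝ) ^ δ * (4 * d) / ε ^ 2) *
          (1 + Real.log ((k : ℝ) * l / ε)) := by gcongr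
      _ = _ := by ring
  · intro C' hC'
    have h1 := abs_le.1 (h C' hC')
    rw [Set.mem_Icc]
    constructor
    · linarith [h1.1]
    · linarith [h1.2]
end
end

section
/- Let (X,d) be a metric space, C ⊆ X, k ≥ 1 an integer, A ⊆ X a finite set of cardinality a ≥ 1, and s : A → ℝ_{>0}. For a k-element subset C'' ⊆ C write f̂(C'') = (1/a)·Σ_{x∈A} (min_{c∈C''} d(x,c))/s(x). Suppose V = {v_1,…,v_k} ⊆ C attains the minimum of f̂ over all k-element subsets of C, and write ĵ = f̂(V). Partition A into cells A_1,…,A_k where each x ∈ A_i satisfies d(x,v_i) = min_{1≤t≤k} d(x,v_t) (ties broken arbitrarily), and for nonempty A_i set s_i = min_{x∈A_i} s(x). Then for every k-element subset U ⊆ C, writing d_i = min_{u∈U} d(v_i,u), one has ĵ + Σ_{i : A_i ≠ ∅} d_i/s_i ≥ f̂(U) ≥ (1/(4a))·Σ_{i : A_i ≠ ∅} d_i/s_i; in particular f̂(U) ≥ d_i/(4a·s_i) for every i with A_i ≠ ∅. -/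
open Metric
open scoped Classical

/-- `f̂(C'') = (1/a)·Σ_{x∈A} d(x,C'')/s(x)`. -/
noncomputable def fHat {X : Type*} [PseudoMetricSpace X] (A : Finset X) (s : X → ℝ)
    (C'' : Finset X) : ℝ :=
  (1 / (A.card : ℝ)) * ∑ x ∈ A, infDist x (C'' : Set X) / s x

/-- two-sided bound on `f̂(U)` in terms of the distances of the
optimal centers `v_i` to `U` (Lemma bounding `f̂` from above and below). -/
theorem fHat_bounds {X : Type*} [PseudoMetricSpace X] (C : Set X) (k : ℕ) (hk : 1 ≤ k)
    (A : Finset X) (ha : 1 ≤ A.card) (s : X → ℝ) (hs : ∀ x ∈ A, 0 < s x)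
    (vc : Fin k → X) (hvinj : Function.Injective vc) (hvC : ∀ i, vc i ∈ C)
    (hmin : ∀ U : Finset X, ↑U ⊆ C → U.card = k →
      fHat A s (Finset.image vc Finset.univ) ≤ fHat A s U)
    (asgn : X → Fin k)
    (hasgn : ∀ x ∈ A, ∀ t : Fin k, dist x (vc (asgn x)) ≤ dist x (vc t)) :
    ∀ U : Finset X, ↑U ⊆ C → U.card = k →
      (fHat A s U ≤ fHat A s (Finset.image vc Finset.univ) +
        ∑ i ∈ Finset.univ.filter (fun i : Fin k => (A.filter (fun x => asgn x = i)).Nonempty),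
          infDist (vc i) (U : Set X) /
            sInf (s '' ↑(A.filter (fun x => asgn x = i)))) ∧
      ((1 / (4 * (A.card : ℝ))) *
        ∑ i ∈ Finset.univ.filter (fun i : Fin k => (A.filter (fun x => asgn x = i)).Nonempty),
          infDist (vc i) (U : Set X) /
            sInf (s '' ↑(A.filter (fun x => asgn x = i))) ≤ fHat A s U) ∧
      ∀ i : Fin k, (A.filter (fun x => asgn x = i)).Nonempty →
        infDist (vc i) (U : Set X) /
            (4 * (A.card : ℝ) * sInf (s '' ↑(A.filter (fun x => asgn x = i)))) ≤
          fHat A s U := by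
  intro U _hUC hUk
  have hUne : (U : Set X).Nonempty := by
    rw [Finset.coe_nonempty, ← Finset.card_pos]; omega
  have hapos : (0 : ℝ) < A.card := by exact_mod_cast ha
  have hVU := hmin U _hUC hUk
  set V : Finset X := Finset.image vc Finset.univ with hV
  have hVmem : ∀ i, vc i ∈ (V : Set X) := fun i => by simp [hV]
  have hdV : ∀ x ∈ A, infDist x (V : Set X) = dist x (vc (asgn x)) := by
    intro x hx
    apply le_antisymm (infDist_le_dist_of_mem (hVmem _))
    rw [le_infDist ⟨_, hVmem (asgn x)⟩]
    intro y hy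
    obtain ⟨t, -, rfl⟩ := Finset.mem_image.1 (Finset.mem_coe.1 hy)
    exact hasgn x hx t
  set σ : Fin k → ℝ := fun i => sInf (s '' ↑(A.filter (fun x => asgn x = i))) with hσ
  have hfin : ∀ i, (s '' (↑(A.filter (fun x => asgn x = i)) : Set X)).Finite := fun i =>
    (Finset.finite_toSet _).image s
  have hσle : ∀ x ∈ A, σ (asgn x) ≤ s x := by
    intro x hx
    apply csInf_le (hfin _).bddBelow
    exact ⟨x, by simp [hx], rfl⟩
  have hσmem : ∀ i, (A.filter (fun x => asgn x = i)).Nonempty →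
      ∃ x ∈ A, asgn x = i ∧ s x = σ i := by
    intro i hi
    have h := Set.Nonempty.csInf_mem ((Finset.coe_nonempty.2 hi).image s) (hfin i)
    obtain ⟨x, hx, hxs⟩ := h
    have hx' := Finset.mem_filter.1 (Finset.mem_coe.1 hx)
    exact ⟨x, hx'.1, hx'.2, hxs⟩
  have hσpos : ∀ i, (A.filter (fun x => asgn x = i)).Nonempty → 0 < σ i := by
    intro i hi
    obtain ⟨x, hx, -, h⟩ := hσmem i hi
    rw [← h]; exact hs x hx
  set I := Finset.univ.filter (fun i : Fin k => (A.filter (fun x => asgn x = i)).Nonempty) with hI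
  set G : Fin k → ℝ := fun i => infDist (vc i) (U : Set X) / σ i with hG
  have hGnn : ∀ i ∈ I, 0 ≤ G i := fun i hi =>
    div_nonneg infDist_nonneg (hσpos i (Finset.mem_filter.1 hi).2).le
  have hne : ∀ x ∈ A, (A.filter (fun y => asgn y = asgn x)).Nonempty := fun x hx =>
    ⟨x, by simp [hx]⟩
  set SU := ∑ x ∈ A, infDist x (U : Set X) / s x with hSU
  set SV := ∑ x ∈ A, infDist x (V : Set X) / s x with hSV
  have hfU : fHat A s U = (1 / (A.card : ℝ)) * SU := rfl
  have hfV : fHat A s V = (1 / (A.card : ℝ)) * SV := rfl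
  have hup : SU ≤ SV + A.card * ∑ i ∈ I, G i := by
    have : SU ≤ ∑ x ∈ A, (infDist x (V : Set X) / s x + ∑ i ∈ I, G i) := by
      apply Finset.sum_le_sum
      intro x hx
      have h1 : infDist x (U : Set X) ≤ infDist (vc (asgn x)) (U : Set X) + dist x (vc (asgn x)) :=
        infDist_le_infDist_add_dist
      have h2 : infDist (vc (asgn x)) (U : Set X) / s x ≤ G (asgn x) :=
        div_le_div_of_nonneg_left infDist_nonneg (hσpos _ (hne x hx)) (hσle x hx)
      have h3 : G (asgn x) ≤ ∑ i ∈ I, G i :=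
        Finset.single_le_sum hGnn (by simpa [hI] using hne x hx)
      have h4 : infDist x (U : Set X) / s x ≤
          (infDist (vc (asgn x)) (U : Set X) + dist x (vc (asgn x))) / s x :=
        div_le_div_of_nonneg_right h1 (hs x hx).le
      rw [add_div] at h4
      rw [hdV x hx]
      linarith
    rw [Finset.sum_add_distrib, Finset.sum_const, nsmul_eq_mul] at this
    exact this
  have hlow : ∑ i ∈ I, G i ≤ SV + SU := by
    have hnn : ∀ x ∈ A, 0 ≤ infDist x (V : Set X) / s x + infDist x (U : Set X) / s x :=
      fun x hx => add_nonneg (div_nonneg infDist_nonneg (hs x hx).le)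
        (div_nonneg infDist_nonneg (hs x hx).le)
    rw [hSV, hSU, ← Finset.sum_add_distrib, ← Finset.sum_fiberwise A asgn]
    calc ∑ i ∈ I, G i ≤ ∑ i ∈ I, ∑ x ∈ A with asgn x = i,
          (infDist x (V : Set X) / s x + infDist x (U : Set X) / s x) := by
          apply Finset.sum_le_sum
          intro i hi
          obtain ⟨x, hx, hxi, hxs⟩ := hσmem i (Finset.mem_filter.1 hi).2
          have h1 : infDist (vc i) (U : Set X) ≤ infDist x (U : Set X) + dist (vc i) x :=
            infDist_le_infDist_add_dist
          have h2 : G i ≤ infDist x (V : Set X) / s x + infDist x (U : Set X) / s x := by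
            rw [hdV x hx, hxi, ← add_div]
            change infDist (vc i) (U : Set X) / σ i ≤ _
            rw [← hxs]
            apply div_le_div_of_nonneg_right _ (hs x hx).le
            rw [dist_comm] at h1
            linarith
          refine h2.trans (Finset.single_le_sum
            (f := fun x => infDist x (V : Set X) / s x + infDist x (U : Set X) / s x) ?_ ?_)
          · intro y hy
            exact hnn y (Finset.mem_filter.1 hy).1
          · simp [hx, hxi]
      _ ≤ _ := by
          apply Finset.sum_le_sum_of_subset_of_nonneg (Finset.subset_univ _)
          intro i _ _
          exact Finset.sum_nonneg fun y hy => hnn y (Finset.mem_filter.1 hy).1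
  have hVU' : SV ≤ SU := by
    rw [hfU, hfV] at hVU
    exact le_of_mul_le_mul_left hVU (by positivity)
  have hSUnn : 0 ≤ SU := Finset.sum_nonneg fun x hx => div_nonneg infDist_nonneg (hs x hx).le
  have hlow' : (1 / (4 * (A.card : ℝ))) * ∑ i ∈ I, G i ≤ fHat A s U := by
    rw [hfU]
    calc (1 / (4 * (A.card : ℝ))) * ∑ i ∈ I, G i ≤ (1 / (4 * (A.card : ℝ))) * (4 * SU) := by
          apply mul_le_mul_of_nonneg_left _ (by positivity)
          linarith
      _ = _ := by field_simp
  refine ⟨?_, hlow', ?_⟩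
  · rw [hfU, hfV]
    calc (1 / (A.card : ℝ)) * SU ≤ (1 / (A.card : ℝ)) * (SV + A.card * ∑ i ∈ I, G i) :=
          mul_le_mul_of_nonneg_left hup (by positivity)
      _ = _ := by field_simp
  · intro i hi
    have h3 : G i ≤ ∑ i ∈ I, G i := Finset.single_le_sum hGnn (by simpa [hI] using hi)
    refine le_trans ?_ hlow'
    calc infDist (vc i) (U : Set X) / (4 * (A.card : ℝ) * σ i)
        = (1 / (4 * (A.card : ℝ))) * G i := by
          simp only [hG]
          rw [div_mul_div_comm, one_mul]
      _ ≤ _ := mul_le_mul_of_nonneg_left h3 (by positivity)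
end

section
/- Let X be a finite set, μ a probability measure on X, f : X → ℝ_{≥0} with f̄ = Σ_{x∈X} μ(x)·f(x) > 0, and s : X → ℝ_{>0} with s(x) ≥ f(x)/f̄ for every x with μ(x) > 0. Put S = Σ_x μ(x)·s(x) and define the probability distribution q(x) = s(x)·μ(x)/S on X. Then the estimator G(x) = S·f(x)/s(x) satisfies E_q[G] = f̄ and Var_q(G) = Σ_x q(x)·(S·f(x)/s(x) − f̄)² ≤ (S − 1)·f̄². -/
/-- the importance-sampling estimator `G(x) = S·f(x)/s(x)` under the
distribution `q(x) = s(x)·μ(x)/S` is unbiased and has variance at most `(S−1)·f̄²`. -/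
theorem importance_sampling_unbiased_and_variance {X : Type*} [Fintype X]
    (μ : X → ℝ) (hμ0 : ∀ x, 0 ≤ μ x) (hμ1 : ∑ x, μ x = 1)
    (f : X → ℝ) (hf0 : ∀ x, 0 ≤ f x)
    (hfbar : 0 < ∑ x, μ x * f x)
    (s : X → ℝ) (hs0 : ∀ x, 0 < s x)
    (hs : ∀ x, 0 < μ x → f x / (∑ y, μ y * f y) ≤ s x) :
    (∑ x, (s x * μ x / (∑ y, μ y * s y)) * ((∑ y, μ y * s y) * f x / s x)) =
      (∑ x, μ x * f x) ∧
    (∑ x, (s x * μ x / (∑ y, μ y * s y)) *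
        ((∑ y, μ y * s y) * f x / s x - ∑ y, μ y * f y) ^ 2) ≤
      ((∑ y, μ y * s y) - 1) * (∑ x, μ x * f x) ^ 2 := by
  set F := ∑ x, μ x * f x with hF
  set S := ∑ x, μ x * s x with hS
  have key : ∀ x, μ x * f x ≤ F * (μ x * s x) := by
    intro x
    rcases (hμ0 x).eq_or_lt with h | h
    · simp [← h]
    · have h1 := (div_le_iff₀ hfbar).1 (hs x h)
      nlinarith [mul_le_mul_of_nonneg_left h1 h.le]
  have hFS : F ≤ F * S := by
    calc F = ∑ x, μ x * f x := hF
      _ ≤ ∑ x, F * (μ x * s x) := Finset.sum_le_sum fun x _ => key x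
      _ = F * S := by rw [← Finset.mul_sum]
  have hSpos : 0 < S := by
    by_contra h
    nlinarith [mul_nonneg hfbar.le (sub_nonneg.2 (not_lt.1 h))]
  constructor
  · rw [hF]
    refine Finset.sum_congr rfl fun x _ => ?_
    have := (hs0 x).ne'
    field_simp
  · have term : ∀ x, (s x * μ x / S) * (S * f x / s x - F) ^ 2 ≤
        (S * F - 2 * F) * (μ x * f x) + F ^ 2 / S * (μ x * s x) := by
      intro x
      have hsx := hs0 x
      have e : (s x * μ x / S) * (S * f x / s x - F) ^ 2 =
          S * (f x / s x * (μ x * f x)) - 2 * F * (μ x * f x) + F ^ 2 / S * (μ x * s x) := by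
        field_simp
        ring
      have h2 : f x / s x * (μ x * f x) ≤ F * (μ x * f x) := by
        calc f x / s x * (μ x * f x) ≤ f x / s x * (F * (μ x * s x)) :=
              mul_le_mul_of_nonneg_left (key x) (div_nonneg (hf0 x) hsx.le)
          _ = F * (μ x * f x) := by field_simp
      rw [e]
      nlinarith [mul_le_mul_of_nonneg_left h2 hSpos.le]
    refine (Finset.sum_le_sum fun x _ => term x).trans ?_
    rw [Finset.sum_add_distrib, ← Finset.mul_sum, ← Finset.mul_sum, ← hF, ← hS,
      div_mul_cancel₀ _ hSpos.ne']
    apply le_of_eq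
    ring
end

section
/- Let X be a finite set, μ a probability measure on X, f : X → ℝ_{≥0} with f̄ = Σ_{x∈X} μ(x)·f(x) > 0, and s : X → ℝ_{>0} with s(x) ≥ f(x)/f̄ for every x with μ(x) > 0. Put S = Σ_x μ(x)·s(x) and q(x) = s(x)·μ(x)/S. Let ε > 0 and let a be an integer with a ≥ max(1, 2(S−1)/ε²). If x_1,…,x_a are drawn independently according to q, then Pr[ | f̄ − Σ_{t=1}^a (S/(a·s(x_t)))·f(x_t) | ≥ ε·f̄ ] ≤ 1/2. -/
open scoped Classical

theorem sum_fin_succ_fun {X : Type*} [Fintype X] (n : ℕ) (F : (Fin (n+1) → X) → ℝ) :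
    ∑ ω, F ω = ∑ x, ∑ ω : Fin n → X, F (Fin.cons x ω) := by
  rw [← Fintype.sum_prod_type']
  exact (Fintype.sum_equiv (Fin.consEquiv (fun _ : Fin (n+1) => X)) _ _ (fun p => rfl)).symm

theorem iid_moments {X : Type*} [Fintype X] (q d : X → ℝ) (hq : ∑ x, q x = 1)
    (hd : ∑ x, q x * d x = 0) (n : ℕ) :
    (∑ ω : Fin n → X, ∏ t, q (ω t)) = 1 ∧
    (∑ ω : Fin n → X, (∏ t, q (ω t)) * ∑ t, d (ω t)) = 0 ∧
    (∑ ω : Fin n → X, (∏ t, q (ω t)) * (∑ t, d (ω t)) ^ 2) = n * ∑ x, q x * d x ^ 2 := by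
  induction n with
  | zero => simp
  | succ n ih =>
    obtain ⟨h0, h1, h2⟩ := ih
    simp only [sum_fin_succ_fun, Fin.prod_univ_succ, Fin.sum_univ_succ, Fin.cons_zero,
      Fin.cons_succ]
    refine ⟨?_, ?_, ?_⟩
    · simp only [← Finset.mul_sum, h0, mul_one, hq]
    · have : ∀ x, ∑ ω : Fin n → X, q x * (∏ t, q (ω t)) * (d x + ∑ t, d (ω t)) = q x * d x := by
        intro x
        have : ∀ ω : Fin n → X, q x * (∏ t, q (ω t)) * (d x + ∑ t, d (ω t)) =
            q x * d x * (∏ t, q (ω t)) + q x * ((∏ t, q (ω t)) * ∑ t, d (ω t)) := by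
          intro ω; ring
        simp only [this, Finset.sum_add_distrib, ← Finset.mul_sum, h0, h1]
        ring
      simp only [this, hd]
    · have : ∀ x, ∑ ω : Fin n → X, q x * (∏ t, q (ω t)) * (d x + ∑ t, d (ω t)) ^ 2 =
          q x * d x ^ 2 + q x * (n * ∑ x, q x * d x ^ 2) := by
        intro x
        have : ∀ ω : Fin n → X, q x * (∏ t, q (ω t)) * (d x + ∑ t, d (ω t)) ^ 2 =
            q x * d x ^ 2 * (∏ t, q (ω t)) + 2 * q x * d x * ((∏ t, q (ω t)) * ∑ t, d (ω t))
            + q x * ((∏ t, q (ω t)) * (∑ t, d (ω t)) ^ 2) := by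
          intro ω; ring
        simp only [this, Finset.sum_add_distrib, ← Finset.mul_sum, h0, h1, h2]
        ring
      simp only [this, Finset.sum_add_distrib, ← Finset.sum_mul, hq]
      push_cast
      ring

/-- concentration for importance sampling: with `a ≥ 2(S−1)/ε²`
independent samples from `q`, the weighted empirical estimate of `f̄` is within
`ε·f̄` of `f̄` with probability at least `1/2`. -/
theorem importance_sampling_concentration {X : Type*} [Fintype X]
    (μ : X → ℝ) (hμ0 : ∀ x, 0 ≤ μ x) (hμ1 : ∑ x, μ x = 1)
    (f : X → ℝ) (hf0 : ∀ x, 0 ≤ f x)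
    (hfbar : 0 < ∑ x, μ x * f x)
    (s : X → ℝ) (hs0 : ∀ x, 0 < s x)
    (hs : ∀ x, 0 < μ x → f x / (∑ y, μ y * f y) ≤ s x)
    (ε : ℝ) (hε : 0 < ε) (a : ℕ) (ha1 : 1 ≤ a)
    (ha : 2 * ((∑ y, μ y * s y) - 1) / ε ^ 2 ≤ (a : ℝ)) :
    -- the probability, over `a` i.i.d. draws from `q(x) = s(x)·μ(x)/S`, of deviating
    -- by at least `ε·f̄` is at most `1/2`
    (∑ ω ∈ Finset.univ.filter (fun ω : Fin a → X =>
        ε * (∑ y, μ y * f y) ≤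
          |(∑ y, μ y * f y) -
            ∑ t : Fin a, ((∑ y, μ y * s y) / ((a : ℝ) * s (ω t))) * f (ω t)|),
      ∏ t : Fin a, s (ω t) * μ (ω t) / (∑ y, μ y * s y)) ≤ 1 / 2 := by
  have hS : 0 < ∑ y, μ y * s y := by
    obtain ⟨x, -, hx⟩ := Finset.exists_ne_zero_of_sum_ne_zero (hμ1.trans_ne one_ne_zero)
    exact Finset.sum_pos' (fun i _ => mul_nonneg (hμ0 i) (hs0 i).le)
      ⟨x, Finset.mem_univ x, mul_pos (lt_of_le_of_ne (hμ0 x) (Ne.symm hx)) (hs0 x)⟩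
  generalize hSg : ∑ y, μ y * s y = S at *
  generalize hmg : ∑ y, μ y * f y = m at *
  have hapos : (0 : ℝ) < a := by exact_mod_cast ha1
  have hq : ∑ x, s x * μ x / S = 1 := by
    rw [← Finset.sum_div, div_eq_one_iff_eq hS.ne', ← hSg]
    exact Finset.sum_congr rfl fun x _ => mul_comm _ _
  have hqf : ∀ x, s x * μ x / S * (S * f x / s x) = μ x * f x := by
    intro x
    have := (hs0 x).ne'
    field_simp
  have hd : ∑ x, s x * μ x / S * (m - S * f x / s x) = 0 := by
    simp only [mul_sub, hqf, Finset.sum_sub_distrib, ← Finset.sum_mul, hq, hmg]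
    ring
  have hV : ∑ x, s x * μ x / S * (m - S * f x / s x) ^ 2 ≤ (S - 1) * m ^ 2 := by
    have h1 : ∀ x, s x * μ x / S * (m - S * f x / s x) ^ 2 ≤
        s x * μ x / S * m ^ 2 - 2 * m * (μ x * f x) + S * m * (μ x * f x) := by
      intro x
      have e : s x * μ x / S * (m - S * f x / s x) ^ 2 =
        s x * μ x / S * m ^ 2 - 2 * m * (s x * μ x / S * (S * f x / s x))
          + (s x * μ x / S * (S * f x / s x)) * (S * f x / s x) := by ring
      rw [e, hqf]
      rcases (hμ0 x).eq_or_lt with h | h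
      · simp [← h]
      · have h2 := hs x h
        rw [div_le_iff₀ hfbar] at h2
        have h3 : S * f x / s x ≤ S * m := by
          rw [div_le_iff₀ (hs0 x)]
          nlinarith
        have := mul_le_mul_of_nonneg_left h3 (mul_nonneg h.le (hf0 x))
        linarith
    refine (Finset.sum_le_sum fun x _ => h1 x).trans (le_of_eq ?_)
    simp only [Finset.sum_add_distrib, Finset.sum_sub_distrib, ← Finset.sum_mul,
      ← Finset.mul_sum, hq, hmg]
    ring
  obtain ⟨-, -, h2⟩ := iid_moments (fun x => s x * μ x / S) (fun x => m - S * f x / s x) hq hd a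
  have hdev : ∀ ω : Fin a → X, m - ∑ t : Fin a, (S / ((a : ℝ) * s (ω t))) * f (ω t) =
      (∑ t, (m - S * f (ω t) / s (ω t))) / a := by
    intro ω
    rw [Finset.sum_sub_distrib, sub_div, Finset.sum_div _ (fun t => S * f (ω t) / s (ω t))]
    congr 1
    · simp; field_simp
    · refine Finset.sum_congr rfl fun t _ => ?_
      have := (hs0 (ω t)).ne'
      field_simp
  simp only [hdev]
  have hc : 0 < (a * (ε * m)) ^ 2 := by positivity
  have hp : ∀ ω : Fin a → X, 0 ≤ ∏ t, s (ω t) * μ (ω t) / S := fun ω =>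
    Finset.prod_nonneg fun t _ => div_nonneg (mul_nonneg (hs0 _).le (hμ0 _)) hS.le
  have key : (a * (ε * m)) ^ 2 * (∑ ω ∈ Finset.univ.filter (fun ω : Fin a → X =>
        ε * m ≤ |(∑ t, (m - S * f (ω t) / s (ω t))) / a|),
      ∏ t : Fin a, s (ω t) * μ (ω t) / S) ≤ a * ((S - 1) * m ^ 2) := by
    refine le_trans ?_ (h2.le.trans (mul_le_mul_of_nonneg_left hV hapos.le))
    rw [Finset.mul_sum]
    refine LE.le.trans ?_
      (Finset.sum_le_sum_of_subset_of_nonneg (Finset.filter_subset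
        (fun ω : Fin a → X => ε * m ≤ |(∑ t, (m - S * f (ω t) / s (ω t))) / a|) Finset.univ)
        fun ω _ _ => mul_nonneg (hp ω) (sq_nonneg _))
    refine Finset.sum_le_sum fun ω hω => ?_
    rw [mul_comm]
    refine mul_le_mul_of_nonneg_left ?_ (hp ω)
    have h := (Finset.mem_filter.mp hω).2
    rw [abs_div, abs_of_pos hapos, le_div_iff₀ hapos] at h
    rw [← sq_abs (∑ t, (m - S * f (ω t) / s (ω t)))]
    refine pow_le_pow_left₀ (by positivity) ?_ 2
    linarith
  rw [div_le_iff₀ (by positivity)] at ha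
  refine le_of_mul_le_mul_left (key.trans ?_) hc
  have := mul_le_mul_of_nonneg_left ha (show 0 ≤ a * m ^ 2 by positivity)
  nlinarith
end

section
/- Let X be a finite set, μ a probability measure on X with μ(x) > 0 for all x ∈ X, and F a family of functions f : X → ℝ_{≥0} with f̄ = Σ_x μ(x)·f(x) > 0 for all f ∈ F. Let s : X → ℝ_{>0} satisfy s(x) ≥ sup_{f∈F} f(x)/f̄ for all x, put S = Σ_x μ(x)·s(x), and q(x) = s(x)·μ(x)/S. Let ε ∈ (0,1) and let a be an integer with a ≥ max(1, 8(S−1)/ε²), and assume additionally that f̂_A = (1/|A|)Σ_{x∈A} f(x)/s(x) > 0 for every f ∈ F and every nonempty multiset A of points of X. Suppose every multiset A of 2a points of X admits an ε-cover-code for (F, A, s) (with parameter S) of cardinality at most (1/8)·e^{a·ε²/(100·S²)}. Then, for x_1,…,x_a drawn independently according to q, with probability at least 1/2 it holds for every f ∈ F that Σ_{t=1}^a (S/(a·s(x_t)))·f(x_t) ∈ [(1−ε)·f̄, (1+ε)·f̄]. -/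
open scoped Classical

/-- `f̄ = Σ_x μ(x)·f(x)`. -/
noncomputable def fBar {X : Type*} [Fintype X] (μ : X → ℝ) (f : X → ℝ) : ℝ :=
  ∑ x, μ x * f x

/-- `f̂ = (1/|A|)·Σ_{x∈A} f(x)/s(x)` for a multiset `A` of points presented as a
tuple `A : Fin N → X` (counted with multiplicity). -/
noncomputable def fHatSeq {X : Type*} {N : ℕ} (s : X → ℝ) (A : Fin N → X)
    (f : X → ℝ) : ℝ :=
  (1 / (N : ℝ)) * ∑ t, f (A t) / s (A t)


lemma cc_total {X : Type*} [Fintype X] (q : X → ℝ) (hq : ∑ x, q x = 1) (n : ℕ) :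
    ∑ ω : Fin n → X, ∏ t, q (ω t) = 1 := by
  have := Finset.prod_univ_sum (fun _ : Fin n => (Finset.univ : Finset X)) (fun _ x => q x)
  simp only [hq, Fintype.piFinset_univ] at this
  simpa using this.symm

lemma cc_sum_succ {X : Type*} [Fintype X] (n : ℕ) (G : (Fin (n+1) → X) → ℝ) :
    ∑ ω, G ω = ∑ x, ∑ ω : Fin n → X, G (Fin.cons x ω) := by
  rw [← Fintype.sum_prod_type']
  exact (Fintype.sum_equiv (Fin.consEquiv (fun _ => X)) _ _ (fun _ => rfl)).symm

lemma cc_first {X : Type*} [Fintype X] (q g : X → ℝ) (hq : ∑ x, q x = 1)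
    (hg : ∑ x, q x * g x = 0) (n : ℕ) :
    ∑ ω : Fin n → X, (∏ t, q (ω t)) * ∑ t, g (ω t) = 0 := by
  induction n with
  | zero => simp
  | succ n ih =>
    rw [cc_sum_succ]
    simp only [Fin.prod_univ_succ, Fin.sum_univ_succ, Fin.cons_zero, Fin.cons_succ]
    have : ∀ x, ∑ ω : Fin n → X, (q x * ∏ t, q (ω t)) * (g x + ∑ t, g (ω t))
        = q x * g x * ∑ ω : Fin n → X, (∏ t, q (ω t))
          + q x * ∑ ω : Fin n → X, (∏ t, q (ω t)) * ∑ t, g (ω t) := by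
      intro x
      rw [Finset.mul_sum, Finset.mul_sum, ← Finset.sum_add_distrib]
      exact Finset.sum_congr rfl (fun ω _ => by ring)
    simp only [this, ih, cc_total q hq, mul_one, mul_zero, add_zero, hg]

lemma cc_second {X : Type*} [Fintype X] (q g : X → ℝ) (hq : ∑ x, q x = 1)
    (hg : ∑ x, q x * g x = 0) (n : ℕ) :
    ∑ ω : Fin n → X, (∏ t, q (ω t)) * (∑ t, g (ω t)) ^ 2 = n * ∑ x, q x * g x ^ 2 := by
  induction n with
  | zero => simp
  | succ n ih =>
    rw [cc_sum_succ]
    simp only [Fin.prod_univ_succ, Fin.sum_univ_succ, Fin.cons_zero, Fin.cons_succ]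
    have : ∀ x, ∑ ω : Fin n → X, (q x * ∏ t, q (ω t)) * (g x + ∑ t, g (ω t)) ^ 2
        = q x * g x ^ 2 * ∑ ω : Fin n → X, (∏ t, q (ω t))
          + 2 * q x * g x * (∑ ω : Fin n → X, (∏ t, q (ω t)) * ∑ t, g (ω t))
          + q x * ∑ ω : Fin n → X, (∏ t, q (ω t)) * (∑ t, g (ω t)) ^ 2 := by
      intro x
      rw [Finset.mul_sum, Finset.mul_sum, Finset.mul_sum, ← Finset.sum_add_distrib,
        ← Finset.sum_add_distrib]
      exact Finset.sum_congr rfl (fun ω _ => by ring)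
    simp only [this, ih, cc_total q hq, cc_first q g hq hg, mul_one, mul_zero, add_zero]
    rw [Finset.sum_add_distrib, ← Finset.sum_mul, hq]
    push_cast; ring

/-- Chebyshev -/
lemma cc_cheb {X : Type*} [Fintype X] (q h : X → ℝ) (hq0 : ∀ x, 0 ≤ q x) (hq : ∑ x, q x = 1)
    (h0 : ∀ x, 0 ≤ h x) (h1 : ∀ x, h x ≤ 1) (p : ℝ) (hp : ∑ x, q x * h x = p)
    (n : ℕ) (L : ℝ) (hL : 0 < L) (hn : 2 * (n * (p - p ^ 2)) ≤ L ^ 2) :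
    1 / 2 ≤ ∑ ω ∈ Finset.univ.filter (fun ω : Fin n → X => |∑ t, (h (ω t) - p)| ≤ L),
      ∏ t, q (ω t) := by
  have hs := cc_second q (fun x => h x - p) hq (by
    simp only [mul_sub, Finset.sum_sub_distrib, ← Finset.sum_mul, hq, hp]; ring) n
  have hv : ∑ x, q x * (h x - p) ^ 2 ≤ p - p ^ 2 := by
    calc ∑ x, q x * (h x - p) ^ 2 ≤ ∑ x, (q x * h x - 2 * p * (q x * h x) + p ^ 2 * q x) := by
          refine Finset.sum_le_sum (fun x _ => ?_)
          nlinarith [mul_nonneg (hq0 x) (mul_nonneg (h0 x) (sub_nonneg.2 (h1 x)))]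
      _ = p - p ^ 2 := by
          rw [Finset.sum_add_distrib, Finset.sum_sub_distrib, ← Finset.mul_sum, ← Finset.mul_sum,
            hp, hq]; ring
  have ht := cc_total q hq n
  rw [← Finset.sum_filter_add_sum_filter_not Finset.univ
    (fun ω : Fin n → X => |∑ t, (h (ω t) - p)| ≤ L)] at ht
  set P := ∑ ω ∈ Finset.univ.filter (fun ω : Fin n → X => |∑ t, (h (ω t) - p)| ≤ L),
      ∏ t, q (ω t)
  have hb : (∑ ω ∈ Finset.univ.filter (fun ω : Fin n → X => ¬ |∑ t, (h (ω t) - p)| ≤ L),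
      ∏ t, q (ω t)) * L ^ 2 ≤ n * ∑ x, q x * (h x - p) ^ 2 := by
    rw [← hs, Finset.sum_mul]
    refine (Finset.sum_le_sum (fun ω hω => ?_)).trans
      (Finset.sum_le_sum_of_subset_of_nonneg (Finset.filter_subset _ _) (fun ω _ _ => ?_))
    · refine mul_le_mul_of_nonneg_left ?_ (Finset.prod_nonneg fun _ _ => hq0 _)
      have := (Finset.mem_filter.1 hω).2
      rw [← sq_abs (∑ t, (h (ω t) - p))]
      push Not at this
      exact pow_le_pow_left₀ hL.le this.le 2
    · exact mul_nonneg (Finset.prod_nonneg fun _ _ => hq0 _) (sq_nonneg _)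
  have hn' := mul_le_mul_of_nonneg_left hv (Nat.cast_nonneg (α := ℝ) n)
  have hL2 : 0 < L ^ 2 := by positivity
  by_contra hcon
  push Not at hcon
  nlinarith

def ccSgn (b : Bool) : ℝ := if b then 1 else -1

lemma cc_mgf {n : ℕ} (c : Fin n → ℝ) (hc : ∀ t, |c t| ≤ 1) (θ : ℝ) :
    ∑ σ : Fin n → Bool, Real.exp (θ * ∑ t, ccSgn (σ t) * c t)
      ≤ 2 ^ n * Real.exp (n * θ ^ 2 / 2) := by
  have h1 := Finset.prod_univ_sum (fun _ : Fin n => (Finset.univ : Finset Bool))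
    (fun t b => Real.exp (θ * (ccSgn b * c t)))
  rw [Fintype.piFinset_univ] at h1
  have h2 : ∀ σ : Fin n → Bool, Real.exp (θ * ∑ t, ccSgn (σ t) * c t)
      = ∏ t, Real.exp (θ * (ccSgn (σ t) * c t)) := by
    intro σ; rw [Finset.mul_sum, Real.exp_sum]
  simp only [h2]
  rw [← h1]
  calc _ ≤ ∏ t : Fin n, (2 * Real.exp (θ ^ 2 / 2)) := by
        refine Finset.prod_le_prod (fun t _ => by positivity) (fun t _ => ?_)
        have := Real.cosh_le_exp_half_sq (θ * c t)
        rw [Real.cosh_eq] at this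
        have h3 : Real.exp ((θ * c t) ^ 2 / 2) ≤ Real.exp (θ ^ 2 / 2) := by
          apply Real.exp_le_exp.2
          have : (c t) ^ 2 ≤ 1 := by
            rw [← sq_abs]; exact pow_le_one₀ (abs_nonneg _) (hc t)
          nlinarith [sq_nonneg θ]
        simp only [Fintype.sum_bool, ccSgn]
        simp only [if_true, one_mul, Bool.false_eq_true, if_false, neg_mul, mul_neg]
        linarith
    _ = _ := by
        rw [Finset.prod_const, Finset.card_univ, Fintype.card_fin, mul_pow, ← Real.exp_nat_mul]
        congr 2; ring

lemma cc_hoeff {n : ℕ} (c : Fin n → ℝ) (hc : ∀ t, |c t| ≤ 1) (d : ℝ) (hd : 0 ≤ d) :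
    ((Finset.univ.filter (fun σ : Fin n → Bool => n * d ≤ |∑ t, ccSgn (σ t) * c t|)).card : ℝ)
      ≤ 2 ^ n * (2 * Real.exp (-(n * d ^ 2 / 2))) := by
  have h1 := cc_mgf c hc d
  have h2 := cc_mgf c hc (-d)
  have h3 : ((Finset.univ.filter (fun σ : Fin n → Bool =>
      n * d ≤ |∑ t, ccSgn (σ t) * c t|)).card : ℝ) * Real.exp (n * d ^ 2)
      ≤ ∑ σ : Fin n → Bool, (Real.exp (d * ∑ t, ccSgn (σ t) * c t)
        + Real.exp (-d * ∑ t, ccSgn (σ t) * c t)) := by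
    rw [← nsmul_eq_mul, ← Finset.sum_const]
    refine (Finset.sum_le_sum (fun σ hσ => ?_)).trans
      (Finset.sum_le_sum_of_subset_of_nonneg (Finset.filter_subset _ _) (fun ω _ _ => by positivity))
    have hσ := (Finset.mem_filter.1 hσ).2
    rcases le_abs.1 hσ with h | h
    · have : Real.exp (n * d ^ 2) ≤ Real.exp (d * ∑ t, ccSgn (σ t) * c t) :=
        Real.exp_le_exp.2 (by nlinarith)
      linarith [Real.exp_pos (-d * ∑ t, ccSgn (σ t) * c t)]
    · have : Real.exp (n * d ^ 2) ≤ Real.exp (-d * ∑ t, ccSgn (σ t) * c t) :=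
        Real.exp_le_exp.2 (by nlinarith)
      linarith [Real.exp_pos (d * ∑ t, ccSgn (σ t) * c t)]
  rw [Finset.sum_add_distrib] at h3
  have h4 : Real.exp (-(n * d ^ 2 / 2)) * Real.exp (n * d ^ 2) = Real.exp (n * d ^ 2 / 2) := by
    rw [← Real.exp_add]; congr 1; ring
  rw [neg_sq] at h2
  refine le_of_mul_le_mul_right ?_ (Real.exp_pos (n * d ^ 2))
  calc _ ≤ _ := h3
    _ ≤ 2 ^ n * (2 * Real.exp (n * d ^ 2 / 2)) := by linarith
    _ = _ := by rw [← h4]; ring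

/-- swap coordinates according to σ -/
def ccSwap {X : Type*} {n : ℕ} (σ : Fin n → Bool) (z : (Fin n → X) × (Fin n → X)) :
    (Fin n → X) × (Fin n → X) :=
  (fun t => if σ t then z.1 t else z.2 t, fun t => if σ t then z.2 t else z.1 t)

lemma ccSwap_invol {X : Type*} {n : ℕ} (σ : Fin n → Bool) :
    Function.Involutive (ccSwap (X := X) σ) := by
  intro z
  ext t <;> simp only [ccSwap] <;> cases σ t <;> simp

lemma cc_symm {X : Type*} [Fintype X] (q : X → ℝ) (hq0 : ∀ x, 0 ≤ q x) (hq : ∑ x, q x = 1) (n : ℕ)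
    (E : (Fin n → X) × (Fin n → X) → Prop) (B : ℝ)
    (hB : ∀ z, ((Finset.univ.filter (fun σ => E (ccSwap σ z))).card : ℝ) ≤ 2 ^ n * B) :
    ∑ z ∈ Finset.univ.filter E, (∏ t, q (z.1 t)) * (∏ t, q (z.2 t)) ≤ B := by
  set w : (Fin n → X) × (Fin n → X) → ℝ := fun z => (∏ t, q (z.1 t)) * (∏ t, q (z.2 t)) with hw
  have hw0 : ∀ z, 0 ≤ w z := fun z =>
    mul_nonneg (Finset.prod_nonneg fun _ _ => hq0 _) (Finset.prod_nonneg fun _ _ => hq0 _)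
  have hws : ∀ σ z, w (ccSwap σ z) = w z := by
    intro σ z
    simp only [hw, ccSwap, ← Finset.prod_mul_distrib]
    refine Finset.prod_congr rfl (fun t _ => ?_)
    cases σ t <;> simp [mul_comm]
  have hw1 : ∑ z, w z = 1 := by
    rw [Fintype.sum_prod_type]
    simp only [hw, ← Finset.mul_sum, cc_total q hq, mul_one]
  have h1 : ∀ σ, ∑ z ∈ Finset.univ.filter E, w z = ∑ z, if E (ccSwap σ z) then w z else 0 := by
    intro σ
    rw [Finset.sum_filter]
    refine (Fintype.sum_equiv (ccSwap_invol σ).toPerm _ _ (fun z => ?_)).symm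
    simp [hws]
  have h2 : (2:ℝ) ^ n * ∑ z ∈ Finset.univ.filter E, w z
      = ∑ σ : Fin n → Bool, ∑ z, if E (ccSwap σ z) then w z else 0 := by
    simp only [← h1, Finset.sum_const, nsmul_eq_mul, Finset.card_univ]
    simp
  rw [Finset.sum_comm] at h2
  have h3 : ∑ z, ∑ σ : Fin n → Bool, (if E (ccSwap σ z) then w z else 0) ≤ ∑ z, 2 ^ n * B * w z := by
    refine Finset.sum_le_sum (fun z _ => ?_)
    rw [← Finset.sum_filter, Finset.sum_const, nsmul_eq_mul]
    exact mul_le_mul_of_nonneg_right (hB z) (hw0 z)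
  rw [← h2, ← Finset.mul_sum, hw1, mul_one] at h3
  exact le_of_mul_le_mul_left h3 (by positivity)

/-- the deterministic real-number step -/
lemma cc_real (a ε p m m' T T' : ℝ) (ha : 0 < a) (hε : 0 < ε) (hp : 0 < p) (hm : 0 < m) (hm1 : m ≤ 1)
    (hmm : m ≤ m') (hT : a * (ε * p / 2) ≤ |m * T|)
    (hTT : |T - T'| ≤ ε * p / 64 * (6 * a)) :
    a * (ε * p * 13 / 32) ≤ |m' * T'| := by
  have hm' : 0 < m' := hm.trans_le hmm
  rw [abs_mul, abs_of_pos hm] at hT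
  rw [abs_mul, abs_of_pos hm']
  have h1 : |T| - ε * p / 64 * (6 * a) ≤ |T'| := by
    have := abs_sub_abs_le_abs_sub T T'; linarith
  have hk : 0 < a * (ε * p) := by positivity
  have h2 : m * (|T| - ε * p / 64 * (6 * a)) ≤ m' * |T'| := by
    calc _ ≤ m * |T'| := mul_le_mul_of_nonneg_left h1 hm.le
      _ ≤ _ := mul_le_mul_of_nonneg_right hmm (abs_nonneg _)
  nlinarith

lemma cc_join {X : Type*} {n : ℕ} (x y : Fin n → X) :
    ∃ A : Fin (2 * n) → X, (∀ t, ∃ i, A i = x t) ∧ (∀ t, ∃ i, A i = y t) ∧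
      ∀ g : X → ℝ, ∑ i, g (A i) = ∑ t, g (x t) + ∑ t, g (y t) := by
  refine ⟨fun i => Fin.append x y (Fin.cast (two_mul n) i), fun t => ?_, fun t => ?_, fun g => ?_⟩
  · exact ⟨Fin.cast (two_mul n).symm (Fin.castAdd n t), by simp⟩
  · exact ⟨Fin.cast (two_mul n).symm (Fin.natAdd n t), by
      show Fin.append x y (Fin.natAdd n t) = y t
      exact Fin.append_right x y t⟩
  · show ∑ i, g (Fin.append x y (finCongr (two_mul n) i)) = _
    rw [Fintype.sum_equiv (finCongr (two_mul n)) _ (fun i => g (Fin.append x y i)) (fun i => rfl),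
      Fin.sum_univ_add]
    simp only [Fin.append_left, Fin.append_right]

lemma cc_swap_sum {X : Type*} {n : ℕ} (σ : Fin n → Bool) (z : (Fin n → X) × (Fin n → X))
    (g : X → ℝ) :
    ∑ t, g ((ccSwap σ z).1 t) - ∑ t, g ((ccSwap σ z).2 t)
      = ∑ t, ccSgn (σ t) * (g (z.1 t) - g (z.2 t)) := by
  rw [← Finset.sum_sub_distrib]
  refine Finset.sum_congr rfl (fun t _ => ?_)
  simp only [ccSwap, ccSgn]
  cases σ t <;> simp

lemma cc_sgn_abs (b : Bool) : |ccSgn b| = 1 := by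
  cases b <;> simp [ccSgn]

/-- the deterministic transfer step from `f` to its code word -/
lemma cc_transfer {X : Type*} {n : ℕ} (hn : 1 ≤ n) (s : X → ℝ)
    (x y : Fin n → X) (A : Fin (2 * n) → X)
    (hAx : ∀ t, ∃ i, A i = x t) (hAy : ∀ t, ∃ i, A i = y t)
    (hAs : ∀ g : X → ℝ, ∑ i, g (A i) = ∑ t, g (x t) + ∑ t, g (y t))
    (f f' : X → ℝ) (b b' ε p : ℝ) (hb : 0 < b) (hb' : 0 < b') (hε : 0 < ε) (hp : 0 < p)
    (hM : 0 < fHatSeq s A f) (hM' : 0 < fHatSeq s A f')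
    (hf1 : ∀ x, f x / s x / b ≤ 1)
    (hi : b' / fHatSeq s A f' ≤ b / fHatSeq s A f)
    (hii : ∀ t, |f (A t) / (fHatSeq s A f * s (A t)) -
                f' (A t) / (fHatSeq s A f' * s (A t))| ≤
              ε * p / 64 *
                (1 + f (A t) / (fHatSeq s A f * s (A t)) +
                  f' (A t) / (fHatSeq s A f' * s (A t))))
    (e : Fin n → ℝ) (he : ∀ t, |e t| = 1)
    (hT : n * (ε * p / 2) ≤ |∑ t, e t * (f (x t) / s (x t) / b - f (y t) / s (y t) / b)|) :
    n * (ε * p * 13 / 32)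
      ≤ |∑ t, e t * (f' (x t) / s (x t) / b' - f' (y t) / s (y t) / b')| := by
  have hn0 : (0 : ℝ) < n := by exact_mod_cast hn
  have key : ∀ g : X → ℝ, 0 < fHatSeq s A g →
      ∑ t, g (x t) / (fHatSeq s A g * s (x t)) + ∑ t, g (y t) / (fHatSeq s A g * s (y t))
        = 2 * n := by
    intro g hg
    rw [← hAs (fun z => g z / (fHatSeq s A g * s z))]
    have : ∀ i, g (A i) / (fHatSeq s A g * s (A i)) = (g (A i) / s (A i)) / fHatSeq s A g := by
      intro i; rw [div_div, mul_comm]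
    simp only [this, ← Finset.sum_div]
    rw [div_eq_iff hg.ne']
    simp only [fHatSeq]
    push_cast
    field_simp
  have k1 := key f hM
  have k2 := key f' hM'
  have hm1 : fHatSeq s A f / b ≤ 1 := by
    have : ∑ i, f (A i) / s (A i) / b ≤ ∑ i : Fin (2 * n), (1:ℝ) :=
      Finset.sum_le_sum (fun i _ => hf1 _)
    rw [← Finset.sum_div] at this
    simp only [Finset.sum_const, Finset.card_univ, Fintype.card_fin, nsmul_eq_mul, mul_one] at this
    unfold fHatSeq
    rw [mul_div_assoc, one_div, inv_mul_le_iff₀ (by push_cast; positivity)]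
    simpa using this
  set M := fHatSeq s A f
  set M' := fHatSeq s A f'
  have conv : ∀ (g : X → ℝ) (N c : ℝ), 0 < N →
      ∑ t, e t * (g (x t) / s (x t) / c - g (y t) / s (y t) / c)
      = N / c * ∑ t, e t * (g (x t) / (N * s (x t)) - g (y t) / (N * s (y t))) := by
    intro g N c hN
    rw [Finset.mul_sum]
    refine Finset.sum_congr rfl (fun t _ => ?_)
    have : ∀ u v : ℝ, u / v / c = N / c * (u / (N * v)) := by
      intro u v
      rw [← div_div u N v, div_right_comm u N v, div_mul_div_comm, mul_comm c N,
        mul_div_mul_left _ _ hN.ne']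
    rw [this, this]; ring
  rw [conv f M b hM] at hT
  rw [conv f' M' b' hM']
  refine cc_real n ε p (M / b) (M' / b') _ _ hn0 hε hp (by positivity) hm1 ?_ hT ?_
  · rw [div_le_div_iff₀ hM' hM] at hi
    rw [div_le_div_iff₀ hb hb']
    linarith
  · rw [← Finset.sum_sub_distrib]
    refine (Finset.abs_sum_le_sum_abs _ _).trans ?_
    have : ∀ t ∈ (Finset.univ : Finset (Fin n)), |e t * (f (x t) / (M * s (x t)) - f (y t) / (M * s (y t)))
        - e t * (f' (x t) / (M' * s (x t)) - f' (y t) / (M' * s (y t)))|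
        ≤ ε * p / 64 * (2 + (f (x t) / (M * s (x t)) + f (y t) / (M * s (y t)))
          + (f' (x t) / (M' * s (x t)) + f' (y t) / (M' * s (y t)))) := by
      intro t _
      obtain ⟨i, hi⟩ := hAx t
      obtain ⟨j, hj⟩ := hAy t
      have h1 := hii i
      have h2 := hii j
      rw [hi] at h1
      rw [hj] at h2
      rw [← mul_sub, abs_mul, he, one_mul]
      have h3 := abs_sub (f (x t) / (M * s (x t)) - f' (x t) / (M' * s (x t)))
        (f (y t) / (M * s (y t)) - f' (y t) / (M' * s (y t)))
      rw [sub_sub_sub_comm]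
      linarith
    refine (Finset.sum_le_sum this).trans (le_of_eq ?_)
    rw [← Finset.mul_sum, Finset.sum_add_distrib, Finset.sum_add_distrib, Finset.sum_add_distrib,
      Finset.sum_add_distrib, k1, k2]
    simp
    ring_nf
    tauto


/-- if every multiset of `2a` points admits a small `ε`-cover-code, then
`a` independent samples from the sensitivity distribution `q` give, with probability at
least `1/2`, an `ε`-approximator for every function of the family `F` simultaneously. -/
theorem cover_code_implies_coreset {X : Type*} [Fintype X]
    (μ : X → ℝ) (hμ0 : ∀ x, 0 < μ x) (hμ1 : ∑ x, μ x = 1)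
    (F : Set (X → ℝ)) (hF0 : ∀ f ∈ F, ∀ x, 0 ≤ f x)
    (hFbar : ∀ f ∈ F, 0 < fBar μ f)
    (s : X → ℝ) (hs0 : ∀ x, 0 < s x)
    (hs : ∀ f ∈ F, ∀ x, f x / fBar μ f ≤ s x)
    (ε : ℝ) (hε : ε ∈ Set.Ioo (0 : ℝ) 1) (a : ℕ) (ha1 : 1 ≤ a)
    (ha : max 1 (8 * ((∑ y, μ y * s y) - 1) / ε ^ 2) ≤ (a : ℝ))
    (hfhat : ∀ N : ℕ, 1 ≤ N → ∀ A : Fin N → X, ∀ f ∈ F, 0 < fHatSeq s A f)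
    -- every multiset of `2a` points admits a small `ε`-cover-code for `(F, A, s)`
    (hcover : ∀ A : Fin (2 * a) → X,
      ∃ F' : Set (X → ℝ), F' ⊆ F ∧ F'.Finite ∧
        (F'.ncard : ℝ) ≤ (1 / 8) *
          Real.exp ((a : ℝ) * ε ^ 2 / (100 * (∑ y, μ y * s y) ^ 2)) ∧
        ∀ f ∈ F, ∃ f' ∈ F',
          fBar μ f' / fHatSeq s A f' ≤ fBar μ f / fHatSeq s A f ∧
          ∀ t : Fin (2 * a),
            |f (A t) / (fHatSeq s A f * s (A t)) -
                f' (A t) / (fHatSeq s A f' * s (A t))| ≤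
              ε / (64 * (∑ y, μ y * s y)) *
                (1 + f (A t) / (fHatSeq s A f * s (A t)) +
                  f' (A t) / (fHatSeq s A f' * s (A t)))) :
    -- the probability over `a` i.i.d. samples from `q(x) = s(x)·μ(x)/S` that the
    -- weighted sample approximates `f̄` to within `ε·f̄` for all `f ∈ F` is ≥ 1/2
    (1 : ℝ) / 2 ≤
      ∑ ω ∈ Finset.univ.filter (fun ω : Fin a → X => ∀ f ∈ F,
          (∑ t : Fin a, ((∑ y, μ y * s y) / ((a : ℝ) * s (ω t))) * f (ω t)) ∈
            Set.Icc ((1 - ε) * fBar μ f) ((1 + ε) * fBar μ f)),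
        ∏ t : Fin a, s (ω t) * μ (ω t) / (∑ y, μ y * s y) := by
  obtain ⟨hε0, hε1⟩ := hε
  have ha0 : (0 : ℝ) < a := by exact_mod_cast ha1
  have hX : Nonempty X := by
    by_contra h
    rw [not_nonempty_iff] at h
    simp at hμ1
  set S := ∑ y, μ y * s y with hS
  have hS0 : 0 < S := Finset.sum_pos (fun y _ => mul_pos (hμ0 y) (hs0 y)) Finset.univ_nonempty
  set q : X → ℝ := fun x => s x * μ x / S with hq
  have hq0 : ∀ x, 0 ≤ q x := fun x => by
    have := hμ0 x; have := hs0 x; simp only [hq]; positivity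
  have hq1 : ∑ x, q x = 1 := by
    simp only [hq, ← Finset.sum_div]
    rw [div_eq_one_iff_eq hS0.ne', hS]
    exact Finset.sum_congr rfl (fun x _ => mul_comm _ _)
  set p : ℝ := 1 / S with hp
  have hp0 : 0 < p := by positivity
  set h : (X → ℝ) → X → ℝ := fun f x => f x / s x / fBar μ f with hh
  have hh0 : ∀ f ∈ F, ∀ x, 0 ≤ h f x := fun f hf x => by
    have := hF0 f hf x; have := hFbar f hf; have := hs0 x; simp only [hh]; positivity
  have hh1 : ∀ f ∈ F, ∀ x, h f x ≤ 1 := fun f hf x => by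
    have := hs f hf x
    simp only [hh]
    rw [div_right_comm, div_le_one (hs0 x)]; exact this
  have hhp : ∀ f ∈ F, ∑ x, q x * h f x = p := fun f hf => by
    have hb := hFbar f hf
    have : ∀ x, q x * h f x = (μ x * f x) / (S * fBar μ f) := by
      intro x
      have := (hs0 x).ne'
      simp only [hq, hh]
      field_simp
    simp only [this, ← Finset.sum_div]
    change fBar μ f / _ = _
    rw [hp]; field_simp
  -- ghost sample
  have hghost : ∀ f ∈ F, 1 / 2 ≤ ∑ ω ∈ Finset.univ.filter
      (fun ω : Fin a → X => |∑ t, (h f (ω t) - p)| ≤ a * (ε * p / 2)), ∏ t, q (ω t) := by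
    intro f hf
    refine cc_cheb q (h f) hq0 hq1 (hh0 f hf) (hh1 f hf) p (hhp f hf) a _ (by positivity) ?_
    have h8 := (le_max_right _ _).trans ha
    rw [div_le_iff₀ (by positivity)] at h8
    have e1 : p - p ^ 2 = (S - 1) * p ^ 2 := by rw [hp]; field_simp
    rw [e1]
    have : 0 ≤ a * p ^ 2 := by positivity
    nlinarith
  set E : (Fin a → X) × (Fin a → X) → Prop := fun z => ∃ f ∈ F,
    a * (ε * p) < |∑ t, (h f (z.1 t) - p)| ∧ |∑ t, (h f (z.2 t) - p)| ≤ a * (ε * p / 2) with hE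
  -- main symmetrization bound
  have hmain : ∑ z ∈ Finset.univ.filter E, (∏ t, q (z.1 t)) * (∏ t, q (z.2 t)) ≤ 1 / 4 := by
    refine cc_symm q hq0 hq1 a E (1 / 4) (fun z => ?_)
    obtain ⟨A, hAx, hAy, hAs⟩ := cc_join z.1 z.2
    obtain ⟨F', hF'F, hF'fin, hcard, hcov⟩ := hcover A
    set d : ℝ := ε * p * 13 / 32 with hd
    have hd0 : 0 ≤ d := by positivity
    have hsub : Finset.univ.filter (fun σ => E (ccSwap σ z)) ⊆ hF'fin.toFinset.biUnion
        (fun f' => Finset.univ.filter (fun σ : Fin a → Bool =>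
          a * d ≤ |∑ t, ccSgn (σ t) * (h f' (z.1 t) - h f' (z.2 t))|)) := by
      intro σ hσ
      obtain ⟨f, hf, hu, hv⟩ := (Finset.mem_filter.1 hσ).2
      obtain ⟨f', hf', hi, hii⟩ := hcov f hf
      simp only [Finset.mem_biUnion, Set.Finite.mem_toFinset, Finset.mem_filter, Finset.mem_univ,
        true_and]
      refine ⟨f', hf', ?_⟩
      refine cc_transfer ha1 s z.1 z.2 A hAx hAy hAs f f' (fBar μ f) (fBar μ f') ε p
        (hFbar f hf) (hFbar f' (hF'F hf')) hε0 hp0 (hfhat _ (by omega) A f hf)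
        (hfhat _ (by omega) A f' (hF'F hf')) (hh1 f hf) hi ?_ (fun t => ccSgn (σ t))
        (fun t => cc_sgn_abs _) ?_
      · intro t
        have e1 : ε * p / 64 = ε / (64 * S) := by rw [hp]; field_simp
        rw [e1]; exact hii t
      · have := cc_swap_sum σ z (h f)
        simp only [hh] at this
        rw [← this]
        have h3 := abs_sub_abs_le_abs_sub (∑ t, (h f ((ccSwap σ z).1 t) - p))
          (∑ t, (h f ((ccSwap σ z).2 t) - p))
        simp only [Finset.sum_sub_distrib] at h3 hu hv
        rw [sub_sub_sub_cancel_right] at h3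
        simp only [hh] at h3 hu hv
        linarith
    have hc1 : ((Finset.univ.filter (fun σ => E (ccSwap σ z))).card : ℝ)
        ≤ (F'.ncard : ℝ) * (2 ^ a * (2 * Real.exp (-(a * d ^ 2 / 2)))) := by
      calc ((Finset.univ.filter (fun σ => E (ccSwap σ z))).card : ℝ) ≤ _ :=
            Nat.cast_le.2 (Finset.card_le_card hsub)
        _ ≤ ((∑ f' ∈ hF'fin.toFinset, (Finset.univ.filter (fun σ : Fin a → Bool =>
          a * d ≤ |∑ t, ccSgn (σ t) * (h f' (z.1 t) - h f' (z.2 t))|)).card : ℕ) : ℝ) :=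
            Nat.cast_le.2 Finset.card_biUnion_le
        _ ≤ ∑ f' ∈ hF'fin.toFinset, (2 ^ a * (2 * Real.exp (-(a * d ^ 2 / 2)))) := by
            rw [Nat.cast_sum]
            refine Finset.sum_le_sum (fun f' hf' => ?_)
            have hf' := hF'F ((Set.Finite.mem_toFinset _).1 hf')
            refine cc_hoeff _ (fun t => ?_) d hd0
            rw [abs_le]
            constructor <;> linarith [hh0 f' hf' (z.1 t), hh0 f' hf' (z.2 t),
              hh1 f' hf' (z.1 t), hh1 f' hf' (z.2 t)]
        _ = _ := by
            rw [Finset.sum_const, nsmul_eq_mul, Set.ncard_eq_toFinset_card F' hF'fin]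
    refine hc1.trans ?_
    have hexp : Real.exp (a * ε ^ 2 / (100 * S ^ 2)) * Real.exp (-(a * d ^ 2 / 2)) ≤ 1 := by
      rw [← Real.exp_add, Real.exp_le_one_iff]
      have e1 : a * ε ^ 2 / (100 * S ^ 2) = a * (ε * p) ^ 2 / 100 := by rw [hp]; field_simp
      have : 0 ≤ a * (ε * p) ^ 2 := by positivity
      rw [e1, hd]; nlinarith
    have h2a : (0:ℝ) < 2 ^ a := by positivity
    calc _ ≤ (1 / 8 * Real.exp (a * ε ^ 2 / (100 * S ^ 2)))
            * (2 ^ a * (2 * Real.exp (-(a * d ^ 2 / 2)))) :=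
          mul_le_mul_of_nonneg_right hcard (by positivity)
      _ = 2 ^ a * (1 / 4) * (Real.exp (a * ε ^ 2 / (100 * S ^ 2)) * Real.exp (-(a * d ^ 2 / 2))) := by
          ring
      _ ≤ 2 ^ a * (1 / 4) * 1 := mul_le_mul_of_nonneg_left hexp (by positivity)
      _ = _ := by ring
  -- conclude
  set G : (Fin a → X) → Prop := fun ω => ∀ f ∈ F,
          (∑ t : Fin a, (S / ((a : ℝ) * s (ω t))) * f (ω t)) ∈
            Set.Icc ((1 - ε) * fBar μ f) ((1 + ε) * fBar μ f) with hG
  have hbad : ∀ ω, ¬ G ω → ∃ f ∈ F, a * (ε * p) < |∑ t, (h f (ω t) - p)| := by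
    intro ω hω
    by_contra hcon
    push Not at hcon
    apply hω
    intro f hf
    have hb := hFbar f hf
    have h1 := hcon f hf
    have e1 : ∑ t : Fin a, (S / ((a : ℝ) * s (ω t))) * f (ω t)
        = fBar μ f + (S * fBar μ f / a) * ∑ t, (h f (ω t) - p) := by
      rw [Finset.sum_sub_distrib, Finset.sum_const, Finset.card_univ, Fintype.card_fin,
        nsmul_eq_mul, mul_sub, Finset.mul_sum]
      have e2 : S * fBar μ f / a * (a * p) = fBar μ f := by rw [hp]; field_simp
      rw [e2, add_sub_cancel]
      refine Finset.sum_congr rfl (fun t _ => ?_)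
      have := (hs0 (ω t)).ne'
      simp only [hh]
      field_simp
    rw [e1]
    have hk : 0 ≤ S * fBar μ f / a := by positivity
    have e3 : S * fBar μ f / a * (a * (ε * p)) = ε * fBar μ f := by rw [hp]; field_simp
    rw [abs_le] at h1
    have h2 := mul_le_mul_of_nonneg_left h1.1 hk
    have h3 := mul_le_mul_of_nonneg_left h1.2 hk
    constructor <;> linarith
  have htot := cc_total q hq1 a
  rw [← Finset.sum_filter_add_sum_filter_not Finset.univ G] at htot
  have hwn : ∀ ω : Fin a → X, 0 ≤ ∏ t, q (ω t) := fun ω => Finset.prod_nonneg fun _ _ => hq0 _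
  have hhalf : (∑ ω ∈ Finset.univ.filter (fun ω => ¬ G ω), ∏ t, q (ω t)) * (1 / 2) ≤ 1 / 4 := by
    refine le_trans ?_ hmain
    rw [Finset.sum_filter E, Fintype.sum_prod_type, Finset.sum_mul]
    refine (Finset.sum_le_sum (fun ω hω => ?_)).trans
      (Finset.sum_le_sum_of_subset_of_nonneg (Finset.filter_subset (fun ω => ¬ G ω) _)
        (fun ω _ _ => Finset.sum_nonneg (fun ω' _ => ?_)))
    · obtain ⟨f, hf, hfb⟩ := hbad ω (Finset.mem_filter.1 hω).2
      refine (mul_le_mul_of_nonneg_left (hghost f hf) (hwn ω)).trans ?_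
      rw [Finset.mul_sum, Finset.sum_filter]
      refine Finset.sum_le_sum (fun ω' _ => ?_)
      split_ifs with h1 h2 h2
      · exact le_rfl
      · exact absurd ⟨f, hf, hfb, h1⟩ h2
      · exact mul_nonneg (hwn _) (hwn _)
      · exact le_rfl
    · split_ifs
      · exact mul_nonneg (hwn _) (hwn _)
      · exact le_rfl
  change 1 / 2 ≤ ∑ ω ∈ Finset.univ.filter G, ∏ t, q (ω t)
  linarith
end

section
/- Let (X,d) be a metric space, μ a probability measure on X with finite support, c ∈ X, and V ⊆ X a set with μ(V) > 0. Put m = (1/μ(V))·Σ_{x∈V} μ(x)·d(x,c). Then for every nonempty finite subset C'' ⊆ X, Σ_{x} μ(x)·d(x,C'') ≥ max{0, d(c,C'') − 2m}·μ(V)/2, where d(y,C'') = min_{c''∈C''} d(y,c''). -/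
open Metric
open scoped Classical

/-- Markov-type lower bound on the clustering cost: if `V` has measure
`μ(V) > 0` and `m` is the `μ`-average distance from `V` to `c`, then for any finite
nonempty center set `C''`, `Σ_x μ(x)·d(x,C'') ≥ max{0, d(c,C'') − 2m}·μ(V)/2`. -/
theorem markov_cost_lower_bound {X : Type*} [PseudoMetricSpace X]
    (μ : X →₀ ℝ) (hμ0 : ∀ x, 0 ≤ μ x) (hμ1 : ∑ x ∈ μ.support, μ x = 1)
    (c : X) (V : Set X)
    (hV : 0 < ∑ x ∈ μ.support.filter (· ∈ V), μ x) :
    ∀ C'' : Finset X, C''.Nonempty →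
      max 0 (infDist c (C'' : Set X) -
          2 * ((∑ x ∈ μ.support.filter (· ∈ V), μ x * dist x c) /
            (∑ x ∈ μ.support.filter (· ∈ V), μ x))) *
        (∑ x ∈ μ.support.filter (· ∈ V), μ x) / 2 ≤
      ∑ x ∈ μ.support, μ x * infDist x (C'' : Set X) := by
  intro C hC
  set F := μ.support.filter (· ∈ V) with hF
  set M := ∑ x ∈ F, μ x with hM
  set A := ∑ x ∈ F, μ x * dist x c with hA
  set D := infDist c (C : Set X) with hD
  have h1 : ∑ x ∈ F, μ x * infDist x (C : Set X) ≤
      ∑ x ∈ μ.support, μ x * infDist x (C : Set X) :=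
    Finset.sum_le_sum_of_subset_of_nonneg (Finset.filter_subset _ _)
      (fun x _ _ => mul_nonneg (hμ0 x) infDist_nonneg)
  have h2 : D * M - A ≤ ∑ x ∈ F, μ x * infDist x (C : Set X) := by
    rw [hM, hA, Finset.mul_sum, ← Finset.sum_sub_distrib]
    refine Finset.sum_le_sum fun x _ => ?_
    have h : D ≤ infDist x (C : Set X) + dist c x := infDist_le_infDist_add_dist
    rw [dist_comm] at h
    nlinarith [hμ0 x]
  have h3 : 0 ≤ ∑ x ∈ F, μ x * infDist x (C : Set X) :=
    Finset.sum_nonneg fun x _ => mul_nonneg (hμ0 x) infDist_nonneg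
  have h4 : 0 ≤ A := Finset.sum_nonneg fun x _ => mul_nonneg (hμ0 x) dist_nonneg
  have h5 : A / M * M = A := div_mul_cancel₀ _ hV.ne'
  rcases max_cases 0 (D - 2 * (A / M)) with ⟨h, _⟩ | ⟨h, _⟩ <;> rw [h]
  · linarith
  · have : (D - 2 * (A / M)) * M = D * M - 2 * A := by rw [← h5]; field_simp
    rw [this]; linarith
end

section
/- Let (X,d) be a metric space, C ⊆ X, k ≥ 1 an integer, and μ a probability measure on X with finite support. Suppose C* = {c*_1,…,c*_k} ⊆ C attains the minimum opt := cost_μ(C*) > 0 over all k-element subsets of C. Let v : supp(μ) → {1,…,k} assign to each point a nearest center of C*, put μ_i = μ(v^{-1}(i)) and, when μ_i > 0, m_i = (1/μ_i)·Σ_{x : v(x)=i} μ(x)·d(x,c*_i). Then for every x ∈ supp(μ) with i = v(x) and every α ∈ (0,1): sens(x) ≤ max{ (2m_i + d(x,c*_i)) / ((1−α)·opt), 2/(α·μ_i) }. -/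
open Metric
open scoped Classical

/-- pointwise sensitivity bound in terms of an optimal solution
`C* = {c*_1, …, c*_k}`, for every `α ∈ (0,1)`. -/
theorem sensitivity_bound_from_optimal {X : Type*} [PseudoMetricSpace X]
    (C : Set X) (k : ℕ) (hk : 1 ≤ k) (μ : X →₀ ℝ) (hμ0 : ∀ x, 0 ≤ μ x)
    (hμ1 : ∑ x ∈ μ.support, μ x = 1)
    (cstar : Fin k → X) (hinj : Function.Injective cstar) (hmem : ∀ i, cstar i ∈ C)
    (hoptpos : 0 < kMedCost μ (Finset.image cstar Finset.univ))
    (hopt : ∀ C' : Finset X, ↑C' ⊆ C → C'.card = k →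
      kMedCost μ (Finset.image cstar Finset.univ) ≤ kMedCost μ C')
    (v : X → Fin k)
    (hv : ∀ x ∈ μ.support, ∀ i : Fin k, dist x (cstar (v x)) ≤ dist x (cstar i)) :
    ∀ x ∈ μ.support, ∀ α : ℝ, α ∈ Set.Ioo (0 : ℝ) 1 →
      kMedSens μ C k x ≤
        max ((2 * ((∑ y ∈ μ.support.filter (fun y => v y = v x), μ y * dist y (cstar (v x))) /
              (∑ y ∈ μ.support.filter (fun y => v y = v x), μ y)) + dist x (cstar (v x))) /
            ((1 - α) * kMedCost μ (Finset.image cstar Finset.univ)))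
          (2 / (α * ∑ y ∈ μ.support.filter (fun y => v y = v x), μ y)) := by
  intro x hx α hα
  obtain ⟨hα0, hα1⟩ := hα
  have hM : 0 < ∑ y ∈ μ.support.filter (fun y => v y = v x), μ y := by
    have hxpos : 0 < μ x := lt_of_le_of_ne (hμ0 x) (Ne.symm (Finsupp.mem_support_iff.mp hx))
    refine lt_of_lt_of_le hxpos ?_
    exact Finset.single_le_sum (f := fun y => μ y) (fun y _ => hμ0 y)
      (Finset.mem_filter.mpr ⟨hx, rfl⟩)
  have hS : 0 ≤ ∑ y ∈ μ.support.filter (fun y => v y = v x), μ y * dist y (cstar (v x)) :=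
    Finset.sum_nonneg fun y _ => mul_nonneg (hμ0 y) dist_nonneg
  have key : ∀ C' : Finset X,
      (∑ y ∈ μ.support.filter (fun y => v y = v x), μ y) * infDist (cstar (v x)) (C' : Set X) ≤
      (∑ y ∈ μ.support.filter (fun y => v y = v x), μ y * dist y (cstar (v x))) +
        kMedCost μ C' := by
    intro C'
    have h1 : ∑ y ∈ μ.support.filter (fun y => v y = v x), μ y * infDist y (C' : Set X) ≤
        kMedCost μ C' :=
      Finset.sum_le_sum_of_subset_of_nonneg (Finset.filter_subset _ _)
        fun y _ _ => mul_nonneg (hμ0 y) infDist_nonneg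
    refine le_trans ?_ (add_le_add le_rfl h1)
    rw [Finset.sum_mul, ← Finset.sum_add_distrib]
    refine Finset.sum_le_sum fun y _ => ?_
    rw [← mul_add]
    refine mul_le_mul_of_nonneg_left ?_ (hμ0 y)
    have := infDist_le_infDist_add_dist (s := (C' : Set X)) (x := cstar (v x)) (y := y)
    rw [dist_comm] at this
    linarith
  generalize (∑ y ∈ μ.support.filter (fun y => v y = v x), μ y * dist y (cstar (v x))) = S at *
  generalize (∑ y ∈ μ.support.filter (fun y => v y = v x), μ y) = M at *
  generalize kMedCost μ (Finset.image cstar Finset.univ) = O at *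
  have hd : 0 ≤ dist x (cstar (v x)) := dist_nonneg
  have hm : 0 ≤ S / M := by positivity
  have h1α : 0 < 1 - α := by linarith
  have hB : 0 ≤ 2 / (α * M) := by positivity
  refine Real.sSup_le ?_ (le_trans hB (le_max_right _ _))
  rintro r ⟨C', hC', hcard, rfl⟩
  have hK := hopt C' hC' hcard
  have hkey := key C'
  generalize kMedCost μ C' = K at *
  have hKpos : 0 < K := by linarith
  rw [div_le_iff₀ hKpos]
  have h2 := infDist_le_infDist_add_dist (s := (C' : Set X)) (x := x) (y := cstar (v x))
  have h3 : infDist (cstar (v x)) (C' : Set X) ≤ S / M + K / M := by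
    rw [← add_div, le_div_iff₀ hM]; linarith
  generalize hA : (2 * (S / M) + dist x (cstar (v x))) / ((1 - α) * O) = A
  generalize hBB : 2 / (α * M) = B at *
  have h4 : 2 * (S / M) + dist x (cstar (v x)) = A * ((1 - α) * O) := by
    rw [← hA]; field_simp
  have h5 : K / M = α * B * K / 2 := by
    rw [← hBB]; field_simp
  have hA0 : 0 ≤ A := by rw [← hA]; positivity
  have h6 : A * ((1 - α) * O) ≤ max A B * ((1 - α) * K) := by
    gcongr
    exact le_max_left _ _
  have h7 : α * B * K ≤ α * max A B * K := by
    gcongr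
    exact le_max_right _ _
  have h8 : 0 ≤ α * B * K := by positivity
  nlinarith
end

section
/- Let δ ≥ 2 be a real number and n ≥ 2 an integer. Define the finite subsets of ℝ²: P_r = { ((j−1)δ, 0) : 1 ≤ j ≤ n }, and for each 1 ≤ i ≤ n, P_i = { ((j−1)δ, −1) : 1 ≤ j ≤ n, j ≠ i } ∪ { ((i−1)δ, 1) }. Then d_H(P_r, P_i) = 1 for every i ∈ {1,…,n}, and d_H(P_i, P_j) = 2 for all i ≠ j in {1,…,n}. -/
noncomputable section

/-- The point `(a, b)` of the Euclidean plane. -/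
def pt (a b : ℝ) : EuclideanSpace ℝ (Fin 2) :=
  (WithLp.equiv 2 (Fin 2 → ℝ)).symm ![a, b]

/-- `P_r = { ((j−1)δ, 0) : 1 ≤ j ≤ n }` (indexed here by `j = 0, …, n−1`). -/
def Pr (δ : ℝ) (n : ℕ) : Set (EuclideanSpace ℝ (Fin 2)) :=
  Set.range fun j : Fin n => pt ((j : ℝ) * δ) 0

/-- `P_i = { ((j−1)δ, −1) : j ≠ i } ∪ { ((i−1)δ, 1) }` (indexed by `j = 0, …, n−1`). -/
def Pi' (δ : ℝ) (n : ℕ) (i : Fin n) : Set (EuclideanSpace ℝ (Fin 2)) :=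
  {q | ∃ j : Fin n, j ≠ i ∧ q = pt ((j : ℝ) * δ) (-1)} ∪ {pt ((i : ℝ) * δ) 1}

theorem dist_pt (a b c d : ℝ) : dist (pt a b) (pt c d) = √((a - c) ^ 2 + (b - d) ^ 2) := by
  simp [pt, EuclideanSpace.dist_eq, Fin.sum_univ_two, Real.dist_eq, sq_abs]

theorem hd_eq {s t : Set (EuclideanSpace ℝ (Fin 2))} {r : ℝ} (hr : 0 ≤ r)
    (hs : s.Finite) (ht : t.Finite)
    (H1 : ∀ x ∈ s, ∃ y ∈ t, dist x y ≤ r) (H2 : ∀ y ∈ t, ∃ x ∈ s, dist y x ≤ r)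
    (H3 : ∃ x ∈ s, ∀ y ∈ t, r ≤ dist x y) : Metric.hausdorffDist s t = r := by
  obtain ⟨x, hx, h3⟩ := H3
  obtain ⟨z, hz, -⟩ := H1 x hx
  apply le_antisymm (Metric.hausdorffDist_le_of_mem_dist hr H1 H2)
  by_contra! h
  obtain ⟨y, hy, hxy⟩ := Metric.exists_dist_lt_of_hausdorffDist_lt hx h
    (Metric.hausdorffEDist_ne_top_of_nonempty_of_bounded ⟨x, hx⟩ ⟨z, hz⟩
      hs.isBounded ht.isBounded)
  exact absurd hxy (not_lt.mpr (h3 y hy))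

theorem finite_Pi' (δ : ℝ) (n : ℕ) (i : Fin n) : (Pi' δ n i).Finite := by
  refine Set.Finite.union ?_ (Set.finite_singleton _)
  refine (Set.finite_range fun j : Fin n => pt ((j : ℝ) * δ) (-1)).subset ?_
  rintro q ⟨j, -, rfl⟩
  exact ⟨j, rfl⟩

/-- each column of `P_i` contains a point, at height `1` or `-1`. -/
theorem exists_col (δ : ℝ) (n : ℕ) (i k : Fin n) :
    ∃ h : ℝ, (h = 1 ∨ h = -1) ∧ pt ((k : ℝ) * δ) h ∈ Pi' δ n i := by
  by_cases hk : k = i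
  · subst hk
    exact ⟨1, Or.inl rfl, Or.inr rfl⟩
  · exact ⟨-1, Or.inr rfl, Or.inl ⟨k, hk, rfl⟩⟩

theorem mem_col {δ : ℝ} {n : ℕ} {i : Fin n} {x} (hx : x ∈ Pi' δ n i) :
    ∃ (k : Fin n) (h : ℝ), (h = 1 ∨ h = -1) ∧ x = pt ((k : ℝ) * δ) h := by
  rcases hx with ⟨j, -, rfl⟩ | rfl
  · exact ⟨j, -1, Or.inr rfl, rfl⟩
  · exact ⟨i, 1, Or.inl rfl, rfl⟩

theorem Pi'_le (δ : ℝ) (n : ℕ) (i j : Fin n) :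
    ∀ x ∈ Pi' δ n i, ∃ y ∈ Pi' δ n j, dist x y ≤ 2 := by
  intro x hx
  obtain ⟨k, h, hh, rfl⟩ := mem_col hx
  obtain ⟨g, hg, hm⟩ := exists_col δ n j k
  refine ⟨_, hm, ?_⟩
  rw [dist_pt, Real.sqrt_le_left (by norm_num)]
  rcases hh with rfl | rfl <;> rcases hg with rfl | rfl <;> norm_num

/-- in the lower-bound construction, `d_H(P_r, P_i) = 1` for all `i`, and
`d_H(P_i, P_j) = 2` for all `i ≠ j`. -/
theorem lower_bound_construction_distances (δ : ℝ) (hδ : 2 ≤ δ) (n : ℕ) (hn : 2 ≤ n) :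
    (∀ i : Fin n, Metric.hausdorffDist (Pr δ n) (Pi' δ n i) = 1) ∧
    (∀ i j : Fin n, i ≠ j → Metric.hausdorffDist (Pi' δ n i) (Pi' δ n j) = 2) := by
  constructor
  · intro i
    refine hd_eq zero_le_one (Set.finite_range _) (finite_Pi' δ n i) ?_ ?_ ?_
    · rintro _ ⟨k, rfl⟩
      obtain ⟨h, hh, hm⟩ := exists_col δ n i k
      refine ⟨_, hm, ?_⟩
      rw [dist_pt, Real.sqrt_le_left (by norm_num)]
      rcases hh with rfl | rfl <;> norm_num
    · intro x hx
      obtain ⟨k, h, hh, rfl⟩ := mem_col hx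
      refine ⟨_, ⟨k, rfl⟩, ?_⟩
      rw [dist_pt, Real.sqrt_le_left (by norm_num)]
      rcases hh with rfl | rfl <;> norm_num
    · refine ⟨_, ⟨i, rfl⟩, ?_⟩
      intro y hy
      obtain ⟨k, h, hh, rfl⟩ := mem_col hy
      rw [dist_pt]
      apply Real.le_sqrt_of_sq_le
      rcases hh with rfl | rfl <;> nlinarith [sq_nonneg ((i : ℝ) * δ - k * δ)]
  · intro i j hij
    refine hd_eq zero_le_two (finite_Pi' δ n i) (finite_Pi' δ n j)
      (Pi'_le δ n i j) (Pi'_le δ n j i) ?_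
    refine ⟨_, Or.inr rfl, ?_⟩
    rintro y (⟨k, -, rfl⟩ | rfl)
    · rw [dist_pt]
      apply Real.le_sqrt_of_sq_le
      nlinarith [sq_nonneg ((i : ℝ) * δ - k * δ)]
    · rw [dist_pt]
      apply Real.le_sqrt_of_sq_le
      have h1 : (1 : ℝ) ≤ ((i : ℝ) - (j : ℝ)) ^ 2 := by
        have hne : ((i : ℕ) : ℤ) - ((j : ℕ) : ℤ) ≠ 0 := by
          have := Fin.val_ne_of_ne hij
          omega
        have : (1 : ℤ) ≤ (((i : ℕ) : ℤ) - ((j : ℕ) : ℤ)) ^ 2 := by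
          have := sq_pos_of_ne_zero hne
          omega
        exact_mod_cast this
      have h2 : (4 : ℝ) ≤ δ ^ 2 := by nlinarith
      nlinarith
end
end
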